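/- There exists k₀ > 1 such that for every k ≥ k₀ the following holds for W_k: there exist real numbers 0 < A₁ < A₂ such that for every A ∈ (A₁, A₂) the infimum of E(γ) over locally Lipschitz curves γ : [a,b] → ℝ² with γ(a) = (−1,0), γ(b) = (1,0) and 𝒜(γ) = A is not attained; moreover A₁ can be taken to be of order 1/√(k²−1) and A₂ → ∞ as k → ∞, so the interval of nonexistence becomes arbitrarily long for large k. -/

import Mathlib

open MeasureTheory Set Filter Topology
open scoped ENNReal

noncomputable section

/-- The Euclidean norm of a vector in `ℝ × ℝ`. -/
def enorm2 (v : ℝ × ℝ) : ℝ := Real.sqrt (v.1 ^ 2 + v.2 ^ 2)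

/-- The degenerate length `E(γ) = ∫ₐᵇ F(γ(t)) |γ'(t)| dt` of a planar curve. -/
def degLen (F : ℝ × ℝ → ℝ) (a b : ℝ) (γ : ℝ → ℝ × ℝ) : ℝ :=
  ∫ t in a..b, F (γ t) * enorm2 (deriv γ t)

/-- The signed area `𝒜(γ) = ∫ₐᵇ γ¹(t) (γ²)'(t) dt` of a planar curve. -/
def sArea (a b : ℝ) (γ : ℝ → ℝ × ℝ) : ℝ :=
  ∫ t in a..b, (γ t).1 * deriv (fun s => (γ s).2) t

/-- A locally Lipschitz curve on `[a,b]` joining `p` to `q`. -/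
def IsCurve (a b : ℝ) (γ : ℝ → ℝ × ℝ) (p q : ℝ × ℝ) : Prop :=
  a ≤ b ∧ LocallyLipschitz γ ∧ γ a = p ∧ γ b = q

/-- The radial profile `g_k`. -/
def gk (k r : ℝ) : ℝ := if r ≤ 1 then r ^ 2 + (k ^ 2 - 1) * r ^ 4 else k ^ 2

/-- The two-well potential `W_k`, radial about `(−1,0)` on the left half-plane and about
`(1,0)` on the right half-plane. -/
def Wk (k : ℝ) (p : ℝ × ℝ) : ℝ :=
  if p.1 ≤ 0 then gk k (enorm2 (p - (-1, 0))) else gk k (enorm2 (p - (1, 0)))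

/-!
The excess `degLen - 2 * sArea` of a curve is bounded below by calibrations: potentials `Φ` such
that `dΦ + 2x dy` is at most the length element `√W_k |dp|`. From the left well to the first
crossing of the axis `x = 0`, and from the last crossing to the right well, the calibrated curves
are spirals around the well; between these crossings one uses a `Φ` vanishing on the axis. The
excess is thus at least `2m`, where `m` is the minimum over the crossing height of an explicit cost.
Equality is impossible: the spirals wind infinitely often around the well, so by Grönwall's
inequality no locally Lipschitz calibrated curve leaves it.

Conversely, a curve can follow the calibrated spirals down to a small distance from the wells and
make up the missing area by turns inside the small discs, where a unit of area costs `2 + o(1)`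
because `√W_k` is asymptotic to the distance to the well. So the infimum is `2A + 2m`, and it is
not attained.
-/

section LocallyLipschitz

theorem ae_differentiableAt_of_locallyLipschitz {E G : Type*} [NormedAddCommGroup E]
    [NormedSpace ℝ E] [FiniteDimensional ℝ E] [MeasurableSpace E] [BorelSpace E]
    [NormedAddCommGroup G] [NormedSpace ℝ G] [FiniteDimensional ℝ G] {μ : Measure E}
    [μ.IsAddHaarMeasure] {f : E → G} (hf : LocallyLipschitz f) :
    ∀ᵐ x ∂μ, DifferentiableAt ℝ f x := by
  have : ProperSpace E := FiniteDimensional.proper_real E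
  have on_ball (n : ℕ) : ∀ᵐ x ∂μ, x ∈ Metric.ball (0 : E) n → DifferentiableAt ℝ f x := by
    obtain ⟨K, hK⟩ := (hf.locallyLipschitzOn (s := Metric.closedBall 0 n)
      ).exists_lipschitzOnWith_of_compact (isCompact_closedBall _ _)
    replace hK := hK.mono Metric.ball_subset_closedBall
    filter_upwards [hK.ae_differentiableWithinAt_of_mem (μ := μ)] with x hx hxn
    exact (hx hxn).differentiableAt (Metric.isOpen_ball.mem_nhds hxn)
  filter_upwards [ae_all_iff.2 on_ball] with x hx
  obtain ⟨n, hn⟩ := exists_nat_gt ‖x‖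
  exact hx n (mem_ball_zero_iff.2 hn)

theorem absolutelyContinuousOnInterval_of_locallyLipschitz {X : Type*} [PseudoMetricSpace X]
    {f : ℝ → X} (hf : LocallyLipschitz f) (a b : ℝ) : AbsolutelyContinuousOnInterval f a b := by
  obtain ⟨K, hK⟩ := (hf.locallyLipschitzOn (s := uIcc a b)).exists_lipschitzOnWith_of_compact
    isCompact_uIcc
  exact hK.absolutelyContinuousOnInterval

theorem exists_norm_deriv_le_of_locallyLipschitz {G : Type*} [NormedAddCommGroup G]
    [NormedSpace ℝ G] {f : ℝ → G} (hf : LocallyLipschitz f) (a b : ℝ) :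
    ∃ M, ∀ t ∈ Icc a b, ‖deriv f t‖ ≤ M := by
  obtain ⟨K, hK⟩ := (hf.locallyLipschitzOn (s := Icc (a - 1) (b + 1))
    ).exists_lipschitzOnWith_of_compact isCompact_Icc
  refine ⟨K, fun t ht => norm_deriv_le_of_lipschitzOn (Icc_mem_nhds ?_ ?_) hK⟩
  · linarith [ht.1]
  · linarith [ht.2]

end LocallyLipschitz

theorem le_mul_exp_of_ae_deriv_le_mul {q : ℝ → ℝ} {a b M : ℝ}
    (hq : AbsolutelyContinuousOnInterval q a b) (hab : a ≤ b)
    (hderiv : ∀ᵐ t ∂volume.restrict (Ioc a b), deriv q t ≤ M * q t) :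
    q b ≤ q a * Real.exp (M * (b - a)) := by
  have hasDeriv_exp (t : ℝ) :
      HasDerivAt (fun t => Real.exp (-M * t)) (Real.exp (-M * t) * -M) t := by
    simpa using ((hasDerivAt_id t).const_mul (-M)).exp
  have exp_ac : AbsolutelyContinuousOnInterval (fun t => Real.exp (-M * t)) a b :=
    absolutelyContinuousOnInterval_of_locallyLipschitz
      (by fun_prop : ContDiff ℝ 1 fun t => Real.exp (-M * t)).locallyLipschitz a b
  have antitone_weighted : ∫ t in a..b, deriv (fun t => q t * Real.exp (-M * t)) t ≤ 0 := by
    rw [intervalIntegral.integral_of_le hab]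
    refine integral_nonpos_of_ae ?_
    filter_upwards [hderiv, ae_restrict_mem measurableSet_Ioc,
      ae_restrict_of_ae hq.ae_differentiableAt] with t ht htab hdiff
    have hqt := (hdiff (Icc_subset_uIcc (Ioc_subset_Icc_self htab))).hasDerivAt
    rw [(hqt.fun_mul (hasDeriv_exp t)).deriv, Pi.zero_apply]
    nlinarith [Real.exp_pos (-M * t)]
  have weighted_le : q b * Real.exp (-M * b) ≤ q a * Real.exp (-M * a) := by
    have ftc := (hq.mul exp_ac).integral_deriv_eq_sub
    simp only [Pi.mul_def] at ftc
    linarith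
  calc q b = q b * Real.exp (-M * b) * Real.exp (M * b) := by
        rw [mul_assoc, ← Real.exp_add, neg_mul, neg_add_cancel, Real.exp_zero, mul_one]
    _ ≤ q a * Real.exp (-M * a) * Real.exp (M * b) := by gcongr
    _ = q a * Real.exp (M * (b - a)) := by rw [mul_assoc, ← Real.exp_add]; ring_nf

section Crossing

variable {f : ℝ → ℝ} {a b d : ℝ}

theorem exists_last_crossing (hab : a ≤ b) (hf : ContinuousOn f (Icc a b)) (ha : f a ≤ d)
    (hb : d ≤ f b) : ∃ s ∈ Icc a b, f s = d ∧ ∀ t ∈ Ioc s b, d < f t := by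
  have closed : IsClosed (Icc a b ∩ f ⁻¹' {d}) :=
    hf.preimage_isClosed_of_isClosed isClosed_Icc isClosed_singleton
  obtain ⟨z, hz, hzd⟩ := intermediate_value_Icc hab hf ⟨ha, hb⟩
  obtain ⟨s, ⟨hs, hsd⟩, hmax⟩ :=
    (isCompact_Icc.of_isClosed_subset closed inter_subset_left).exists_isGreatest ⟨z, hz, hzd⟩
  refine ⟨s, hs, hsd, fun t ht => ?_⟩
  by_contra! htd
  have hta : a ≤ t := hs.1.trans ht.1.le
  obtain ⟨z, hz, hzd⟩ :=
    intermediate_value_Icc ht.2 (hf.mono (Icc_subset_Icc_left hta)) ⟨htd, hb⟩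
  exact (ht.1.trans_le hz.1).not_ge (hmax ⟨⟨hta.trans hz.1, hz.2⟩, hzd⟩)

theorem exists_first_crossing (hab : a ≤ b) (hf : ContinuousOn f (Icc a b)) (ha : f a ≤ d)
    (hb : d ≤ f b) : ∃ s ∈ Icc a b, f s = d ∧ ∀ t ∈ Ico a s, f t < d := by
  obtain ⟨s, hs, hsd, hlast⟩ := exists_last_crossing (f := fun t => -f (-t)) (a := -b)
    (b := -a) (d := -d) (neg_le_neg hab)
    (hf.comp continuousOn_neg fun t ht => ⟨le_neg_of_le_neg ht.2, neg_le_of_neg_le ht.1⟩).neg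
    (by simpa using hb) (by simpa using ha)
  refine ⟨-s, ⟨le_neg_of_le_neg hs.2, neg_le_of_neg_le hs.1⟩, by linarith, fun t ht => ?_⟩
  have := hlast (-t) ⟨by linarith [ht.2], neg_le_neg ht.1⟩
  simpa using this

end Crossing

section EuclideanPlane

theorem enorm2_nonneg (v : ℝ × ℝ) : 0 ≤ enorm2 v := Real.sqrt_nonneg _

theorem enorm2_sq (v : ℝ × ℝ) : enorm2 v ^ 2 = v.1 ^ 2 + v.2 ^ 2 := Real.sq_sqrt (by positivity)

theorem continuous_enorm2 : Continuous enorm2 := by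
  unfold enorm2
  fun_prop

theorem abs_fst_le_enorm2 (v : ℝ × ℝ) : |v.1| ≤ enorm2 v :=
  Real.abs_le_sqrt (by nlinarith [sq_nonneg v.2])

theorem abs_snd_le_enorm2 (v : ℝ × ℝ) : |v.2| ≤ enorm2 v :=
  Real.abs_le_sqrt (by nlinarith [sq_nonneg v.1])

theorem enorm2_le_two_mul_norm (v : ℝ × ℝ) : enorm2 v ≤ 2 * ‖v‖ := by
  refine Real.sqrt_le_iff.2 ⟨by positivity, ?_⟩
  have h₁ : v.1 ^ 2 ≤ ‖v‖ ^ 2 := by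
    rw [← sq_abs]
    exact pow_le_pow_left₀ (abs_nonneg _) (norm_fst_le v) 2
  have h₂ : v.2 ^ 2 ≤ ‖v‖ ^ 2 := by
    rw [← sq_abs]
    exact pow_le_pow_left₀ (abs_nonneg _) (norm_snd_le v) 2
  nlinarith [sq_nonneg ‖v‖]

theorem enorm2_mul_enorm2_sq (u v : ℝ × ℝ) :
    (enorm2 u * enorm2 v) ^ 2 =
      (u.1 * v.1 + u.2 * v.2) ^ 2 + (u.1 * v.2 - u.2 * v.1) ^ 2 := by
  rw [mul_pow, enorm2_sq, enorm2_sq]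
  ring

theorem dot_le_enorm2_mul_enorm2 (u v : ℝ × ℝ) :
    u.1 * v.1 + u.2 * v.2 ≤ enorm2 u * enorm2 v := by
  refine le_of_sq_le_sq ?_ (mul_nonneg (enorm2_nonneg u) (enorm2_nonneg v))
  rw [enorm2_mul_enorm2_sq]
  exact le_add_of_nonneg_right (sq_nonneg _)

theorem cross_le_enorm2_mul_enorm2 (u v : ℝ × ℝ) :
    u.1 * v.2 - u.2 * v.1 ≤ enorm2 u * enorm2 v := by
  refine le_of_sq_le_sq ?_ (mul_nonneg (enorm2_nonneg u) (enorm2_nonneg v))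
  rw [enorm2_mul_enorm2_sq]
  exact le_add_of_nonneg_left (sq_nonneg _)

theorem cross_eq_zero_of_dot_eq_enorm2_mul_enorm2 {u v : ℝ × ℝ}
    (h : u.1 * v.1 + u.2 * v.2 = enorm2 u * enorm2 v) : u.1 * v.2 - u.2 * v.1 = 0 := by
  have := enorm2_mul_enorm2_sq u v
  rw [← h] at this
  exact pow_eq_zero_iff two_ne_zero |>.1 (by linarith)

end EuclideanPlane

section Curve

variable {F : ℝ × ℝ → ℝ} {γ : ℝ → ℝ × ℝ} {a b s t : ℝ}

theorem locallyLipschitz_fst_comp (hγ : LocallyLipschitz γ) :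
    LocallyLipschitz fun t => (γ t).1 :=
  LipschitzWith.prod_fst.locallyLipschitz.comp hγ

theorem locallyLipschitz_snd_comp (hγ : LocallyLipschitz γ) :
    LocallyLipschitz fun t => (γ t).2 :=
  LipschitzWith.prod_snd.locallyLipschitz.comp hγ

theorem hasDerivAt_fst_comp {v : ℝ × ℝ} (h : HasDerivAt γ v t) :
    HasDerivAt (fun s => (γ s).1) v.1 t :=
  (hasFDerivAt_fst (𝕜 := ℝ) (p := γ t)).comp_hasDerivAt t h

theorem hasDerivAt_snd_comp {v : ℝ × ℝ} (h : HasDerivAt γ v t) :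
    HasDerivAt (fun s => (γ s).2) v.2 t :=
  (hasFDerivAt_snd (𝕜 := ℝ) (p := γ t)).comp_hasDerivAt t h

theorem intervalIntegrable_degLen (hF : Continuous F) (hγ : LocallyLipschitz γ) (a b : ℝ) :
    IntervalIntegrable (fun t => F (γ t) * enorm2 (deriv γ t)) volume a b := by
  refine IntervalIntegrable.continuousOn_mul ?_ (hF.comp hγ.continuous).continuousOn
  obtain ⟨M, hM⟩ := exists_norm_deriv_le_of_locallyLipschitz hγ (min a b) (max a b)
  refine (intervalIntegrable_const (c := 2 * M)).mono_fun
    (continuous_enorm2.measurable.comp (measurable_deriv γ)).aestronglyMeasurable ?_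
  filter_upwards [ae_restrict_mem measurableSet_uIoc] with t ht
  rw [Real.norm_of_nonneg (enorm2_nonneg _)]
  calc enorm2 (deriv γ t) ≤ 2 * ‖deriv γ t‖ := enorm2_le_two_mul_norm _
    _ ≤ 2 * M := by gcongr; exact hM t (uIoc_subset_uIcc ht)
    _ ≤ ‖2 * M‖ := le_abs_self _

theorem intervalIntegrable_sArea (hγ : LocallyLipschitz γ) (a b : ℝ) :
    IntervalIntegrable (fun t => (γ t).1 * deriv (fun s => (γ s).2) t) volume a b :=
  (absolutelyContinuousOnInterval_of_locallyLipschitz (locallyLipschitz_snd_comp hγ) a b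
    ).intervalIntegrable_deriv.continuousOn_mul
    (locallyLipschitz_fst_comp hγ).continuous.continuousOn

theorem degLen_add_adjacent (hF : Continuous F) (hγ : LocallyLipschitz γ) (a b c : ℝ) :
    degLen F a b γ + degLen F b c γ = degLen F a c γ :=
  intervalIntegral.integral_add_adjacent_intervals (intervalIntegrable_degLen hF hγ a b)
    (intervalIntegrable_degLen hF hγ b c)

theorem sArea_add_adjacent (hγ : LocallyLipschitz γ) (a b c : ℝ) :
    sArea a b γ + sArea b c γ = sArea a c γ :=
  intervalIntegral.integral_add_adjacent_intervals (intervalIntegrable_sArea hγ a b)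
    (intervalIntegrable_sArea hγ b c)

theorem degLen_nonneg (hF : 0 ≤ F) (hab : a ≤ b) : 0 ≤ degLen F a b γ :=
  intervalIntegral.integral_nonneg hab fun _ _ => mul_nonneg (hF _) (enorm2_nonneg _)

theorem degLen_mono_interval (hF : Continuous F) (hF₀ : 0 ≤ F) (hγ : LocallyLipschitz γ)
    (has : a ≤ s) (hst : s ≤ t) (htb : t ≤ b) : degLen F s t γ ≤ degLen F a b γ :=
  intervalIntegral.integral_mono_interval has hst htb
    (ae_of_all _ fun _ => mul_nonneg (hF₀ _) (enorm2_nonneg _))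
    (intervalIntegrable_degLen hF hγ a b)

end Curve

section Calibration

/-- The one-form `dΦ + l x dy` on the plane, at the point `p` and the vector `v`. -/
def calForm (Φ : ℝ × ℝ → ℝ) (l : ℝ) (p v : ℝ × ℝ) : ℝ := fderiv ℝ Φ p v + l * (p.1 * v.2)

/-- `Φ` calibrates the functional `degLen F - l * sArea` on `S`: the form `dΦ + l x dy` is at
most the length element `F |dp|` at the points of `S`. -/
def IsCalibration (F : ℝ × ℝ → ℝ) (l : ℝ) (S : Set (ℝ × ℝ)) (Φ : ℝ × ℝ → ℝ) : Prop :=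
  ContDiff ℝ 1 Φ ∧ ∀ p ∈ S, ∀ v, calForm Φ l p v ≤ F p * enorm2 v

variable {F Φ : ℝ × ℝ → ℝ} {l : ℝ} {S : Set (ℝ × ℝ)} {γ : ℝ → ℝ × ℝ} {a b : ℝ}

theorem deriv_comp_add_ae_eq_calForm (hΦ : ContDiff ℝ 1 Φ) (hγ : LocallyLipschitz γ) :
    (fun t => deriv (Φ ∘ γ) t + l * ((γ t).1 * deriv (fun s => (γ s).2) t)) =ᵐ[volume]
      fun t => calForm Φ l (γ t) (deriv γ t) := by
  filter_upwards [ae_differentiableAt_of_locallyLipschitz hγ] with t ht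
  have hΦt := (hΦ.differentiable one_ne_zero (γ t)).hasFDerivAt
  rw [(hΦt.comp_hasDerivAt t ht.hasDerivAt).deriv, (hasDerivAt_snd_comp ht.hasDerivAt).deriv,
    calForm]

theorem intervalIntegrable_deriv_comp (hΦ : ContDiff ℝ 1 Φ) (hγ : LocallyLipschitz γ)
    (a b : ℝ) : IntervalIntegrable (deriv (Φ ∘ γ)) volume a b :=
  (absolutelyContinuousOnInterval_of_locallyLipschitz (hΦ.locallyLipschitz.comp hγ) a b
    ).intervalIntegrable_deriv

theorem intervalIntegrable_calForm (hΦ : ContDiff ℝ 1 Φ) (hγ : LocallyLipschitz γ) (a b : ℝ) :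
    IntervalIntegrable (fun t => calForm Φ l (γ t) (deriv γ t)) volume a b :=
  ((intervalIntegrable_deriv_comp hΦ hγ a b).add
    ((intervalIntegrable_sArea hγ a b).const_mul l)).congr_ae
    (ae_restrict_of_ae (deriv_comp_add_ae_eq_calForm hΦ hγ))

theorem integral_calForm (hΦ : ContDiff ℝ 1 Φ) (hγ : LocallyLipschitz γ) (a b : ℝ) :
    ∫ t in a..b, calForm Φ l (γ t) (deriv γ t) = Φ (γ b) - Φ (γ a) + l * sArea a b γ := by
  have ftc := (absolutelyContinuousOnInterval_of_locallyLipschitz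
    (hΦ.locallyLipschitz.comp hγ) a b).integral_deriv_eq_sub
  rw [← intervalIntegral.integral_congr_ae_restrict
      (ae_restrict_of_ae (deriv_comp_add_ae_eq_calForm hΦ hγ)),
    intervalIntegral.integral_add (intervalIntegrable_deriv_comp hΦ hγ a b)
      ((intervalIntegrable_sArea hγ a b).const_mul l),
    ftc, intervalIntegral.integral_const_mul]
  rfl

theorem IsCalibration.sub_add_mul_sArea_le_degLen (hΦ : IsCalibration F l S Φ)
    (hF : Continuous F) (hγ : LocallyLipschitz γ) (hab : a ≤ b) (hS : ∀ t ∈ Icc a b, γ t ∈ S) :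
    Φ (γ b) - Φ (γ a) + l * sArea a b γ ≤ degLen F a b γ := by
  rw [← integral_calForm hΦ.1 hγ]
  exact intervalIntegral.integral_mono_on hab (intervalIntegrable_calForm hΦ.1 hγ a b)
    (intervalIntegrable_degLen hF hγ a b) fun t ht => hΦ.2 _ (hS t ht) _

theorem IsCalibration.ae_calForm_eq (hΦ : IsCalibration F l S Φ) (hF : Continuous F)
    (hγ : LocallyLipschitz γ) (hab : a ≤ b) (hS : ∀ t ∈ Icc a b, γ t ∈ S)
    (heq : Φ (γ b) - Φ (γ a) + l * sArea a b γ = degLen F a b γ) :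
    ∀ᵐ t ∂volume.restrict (Ioc a b), calForm Φ l (γ t) (deriv γ t) =
      F (γ t) * enorm2 (deriv γ t) := by
  rw [← integral_calForm hΦ.1 hγ, degLen, intervalIntegral.integral_of_le hab,
    intervalIntegral.integral_of_le hab] at heq
  refine (integral_eq_iff_of_ae_le (intervalIntegrable_calForm hΦ.1 hγ a b).1
    (intervalIntegrable_degLen hF hγ a b).1 ?_).1 heq
  filter_upwards [ae_restrict_mem measurableSet_Ioc] with t ht
  exact hΦ.2 _ (hS t (Ioc_subset_Icc_self ht)) _

theorem isCalibration_of_calForm_eq_dot {w : ℝ × ℝ → ℝ × ℝ} (hΦ : ContDiff ℝ 1 Φ)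
    (hform : ∀ p v, calForm Φ l p v = (w p).1 * v.1 + (w p).2 * v.2)
    (hw : ∀ p ∈ S, enorm2 (w p) ≤ F p) : IsCalibration F l S Φ := by
  refine ⟨hΦ, fun p hp v => ?_⟩
  rw [hform]
  exact (dot_le_enorm2_mul_enorm2 _ _).trans
    (mul_le_mul_of_nonneg_right (hw p hp) (enorm2_nonneg v))

theorem isCalibration_smul_of_le_enorm2 {m d : ℝ} (hm : 0 ≤ m) {ℓ : ℝ × ℝ →L[ℝ] ℝ}
    (hℓ : ∀ v, ℓ v ≤ enorm2 v) (hF : ∀ p, d ≤ ℓ p → m ≤ F p) :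
    IsCalibration F 0 {p | d ≤ ℓ p} ⇑(m • ℓ) := by
  refine ⟨(m • ℓ).contDiff, fun p hp v => ?_⟩
  rw [calForm, ContinuousLinearMap.fderiv, zero_mul, add_zero]
  calc m * ℓ v ≤ m * enorm2 v := by gcongr; exact hℓ v
    _ ≤ F p * enorm2 v := mul_le_mul_of_nonneg_right (hF p hp) (enorm2_nonneg v)

theorem mul_sub_le_degLen_of_le_enorm2 {m d t : ℝ} {ℓ : ℝ × ℝ →L[ℝ] ℝ} (hm : 0 ≤ m)
    (hℓ : ∀ v, ℓ v ≤ enorm2 v) (hF : ∀ p, d ≤ ℓ p → m ≤ F p) (hFc : Continuous F) (hF₀ : 0 ≤ F)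
    (hγ : LocallyLipschitz γ) (ha : ℓ (γ a) ≤ d) (ht : t ∈ Icc a b) :
    m * (ℓ (γ t) - d) ≤ degLen F a b γ := by
  rcases le_total (ℓ (γ t)) d with hle | hge
  · exact (mul_nonpos_of_nonneg_of_nonpos hm (sub_nonpos.2 hle)).trans
      (degLen_nonneg hF₀ (ht.1.trans ht.2))
  obtain ⟨s, hs, hsd, hlast⟩ := exists_last_crossing ht.1
    (ℓ.continuous.comp hγ.continuous).continuousOn ha hge
  have hmem : ∀ u ∈ Icc s t, γ u ∈ {p | d ≤ ℓ p} := fun u hu => by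
    rcases hu.1.eq_or_lt with rfl | hsu
    · exact hsd.ge
    · exact (hlast u ⟨hsu, hu.2⟩).le
  calc m * (ℓ (γ t) - d) = (m • ℓ) (γ t) - (m • ℓ) (γ s) + 0 * sArea s t γ := by
        rw [← hsd]
        simp only [smul_apply, smul_eq_mul, Function.comp_apply]
        ring
    _ ≤ degLen F s t γ := (isCalibration_smul_of_le_enorm2 hm hℓ hF).sub_add_mul_sArea_le_degLen
        hFc hγ hs.2 hmem
    _ ≤ degLen F a b γ := degLen_mono_interval hFc hF₀ hγ hs.1 hs.2 ht.2

end Calibration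

section Potential

/-- The squared distance from `p` to the well `(-σ, 0)`, for `σ = 1` or `σ = -1`. -/
def wellDistSq (σ : ℝ) (p : ℝ × ℝ) : ℝ := (p.1 + σ) ^ 2 + p.2 ^ 2

/-- The conformal factor `√W_k` of the degenerate length. -/
def weight (k : ℝ) (p : ℝ × ℝ) : ℝ := √(Wk k p)

variable {k σ : ℝ}

theorem wellDistSq_nonneg (σ : ℝ) (p : ℝ × ℝ) : 0 ≤ wellDistSq σ p := by
  unfold wellDistSq
  positivity

theorem gk_of_le_one {r : ℝ} (hr : r ≤ 1) : gk k r = r ^ 2 + (k ^ 2 - 1) * r ^ 4 := if_pos hr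

theorem gk_of_one_le {r : ℝ} (hr : 1 ≤ r) : gk k r = k ^ 2 := by
  rcases hr.eq_or_lt with rfl | hr
  · rw [gk_of_le_one le_rfl]
    ring
  · exact if_neg hr.not_ge

theorem gk_sqrt_of_le_one {q : ℝ} (h₀ : 0 ≤ q) (h₁ : q ≤ 1) :
    gk k √q = q + (k ^ 2 - 1) * q ^ 2 := by
  rw [gk_of_le_one (Real.sqrt_le_one.2 h₁), Real.sq_sqrt h₀, show √q ^ 4 = (√q ^ 2) ^ 2 by ring,
    Real.sq_sqrt h₀]

theorem continuous_gk (k : ℝ) : Continuous (gk k) :=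
  Continuous.if_le (by fun_prop) (by fun_prop) continuous_id continuous_const (by
    rintro r rfl
    ring)

theorem gk_le_gk {r s : ℝ} (hk : 1 ≤ k) (hr : 0 ≤ r) (hrs : r ≤ s) : gk k r ≤ gk k s := by
  have hc : 0 ≤ k ^ 2 - 1 := by nlinarith
  rcases le_total s 1 with hs | hs
  · rw [gk_of_le_one hs, gk_of_le_one (hrs.trans hs)]
    gcongr
  rcases le_total r 1 with hr₁ | hr₁
  · rw [gk_of_one_le hs, ← gk_of_one_le le_rfl, gk_of_le_one hr₁, gk_of_le_one le_rfl]
    gcongr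
  · rw [gk_of_one_le hr₁, gk_of_one_le hs]

theorem Wk_eq_gk (hσ : σ = 1 ∨ σ = -1) {p : ℝ × ℝ} (hp : σ * p.1 ≤ 0) :
    Wk k p = gk k √(wellDistSq σ p) := by
  unfold Wk wellDistSq enorm2
  rcases hσ with rfl | rfl
  · rw [if_pos (by linarith)]
    simp
  · split_ifs with hx
    · simp [show p.1 = 0 by linarith]
    · simp [sub_eq_add_neg]

theorem continuous_Wk (k : ℝ) : Continuous (Wk k) := by
  have := continuous_gk k
  have := continuous_enorm2
  refine Continuous.if_le (by fun_prop) (by fun_prop) continuous_fst continuous_const fun p hp => ?_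
  simp [enorm2, hp]

theorem Wk_neg_fst (k x y : ℝ) : Wk k (-x, y) = Wk k (x, y) := by
  obtain ⟨σ, hσ, hx⟩ : ∃ σ : ℝ, (σ = 1 ∨ σ = -1) ∧ σ * x ≤ 0 := by
    rcases le_total x 0 with hx | hx
    · exact ⟨1, .inl rfl, by linarith⟩
    · exact ⟨-1, .inr rfl, by linarith⟩
  have hσ' : -σ = 1 ∨ -σ = -1 := by rcases hσ with rfl | rfl <;> simp
  rw [Wk_eq_gk (p := (x, y)) hσ hx, Wk_eq_gk hσ' (by simpa using hx), wellDistSq, wellDistSq]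
  ring_nf

theorem Wk_le_gk (hk : 1 ≤ k) (p : ℝ × ℝ) : Wk k p ≤ gk k √(wellDistSq 1 p) := by
  rcases le_total p.1 0 with hx | hx
  · rw [Wk_eq_gk (.inl rfl) (by linarith)]
  · rw [Wk_eq_gk (σ := -1) (.inr rfl) (by linarith)]
    refine gk_le_gk hk (Real.sqrt_nonneg _) (Real.sqrt_le_sqrt ?_)
    unfold wellDistSq
    nlinarith

theorem Wk_of_one_le_wellDistSq {p : ℝ × ℝ} (hl : 1 ≤ wellDistSq 1 p)
    (hr : 1 ≤ wellDistSq (-1) p) : Wk k p = k ^ 2 := by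
  rcases le_total p.1 0 with hx | hx
  · rw [Wk_eq_gk (.inl rfl) (by linarith), gk_of_one_le (Real.one_le_sqrt.2 hl)]
  · rw [Wk_eq_gk (σ := -1) (.inr rfl) (by linarith), gk_of_one_le (Real.one_le_sqrt.2 hr)]

theorem continuous_weight (k : ℝ) : Continuous (weight k) := (continuous_Wk k).sqrt

theorem weight_nonneg (k : ℝ) : 0 ≤ weight k := fun _ => Real.sqrt_nonneg _

theorem le_weight_of_two_le_abs_fst {p : ℝ × ℝ} (hp : 2 ≤ |p.1|) : k ≤ weight k p := by
  refine Real.le_sqrt_of_sq_le (Wk_of_one_le_wellDistSq ?_ ?_).ge <;>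
  · unfold wellDistSq
    nlinarith [sq_nonneg p.2, le_abs_self p.1, neg_abs_le p.1, sq_abs p.1]

theorem le_weight_of_one_le_abs_snd {p : ℝ × ℝ} (hp : 1 ≤ |p.2|) : k ≤ weight k p := by
  refine Real.le_sqrt_of_sq_le (Wk_of_one_le_wellDistSq ?_ ?_).ge <;>
  · unfold wellDistSq
    nlinarith [sq_nonneg (p.1 + 1), sq_nonneg (p.1 + -1), sq_abs p.2]

end Potential

section Confinement

variable {k C : ℝ} {γ : ℝ → ℝ × ℝ} {a b t : ℝ}

theorem apply_le_add_of_degLen_le {d : ℝ} {ℓ : ℝ × ℝ →L[ℝ] ℝ} (hk : 0 < k)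
    (hℓ : ∀ v, ℓ v ≤ enorm2 v) (hd : ∀ p, d ≤ ℓ p → k ≤ weight k p) (hγ : LocallyLipschitz γ)
    (ha : ℓ (γ a) ≤ d) (hE : degLen (weight k) a b γ ≤ C * k) (ht : t ∈ Icc a b) :
    ℓ (γ t) ≤ d + C := by
  have := (mul_sub_le_degLen_of_le_enorm2 hk.le hℓ hd (continuous_weight k) (weight_nonneg k)
    hγ ha ht).trans hE
  rw [mul_comm C, mul_le_mul_iff_right₀ hk] at this
  linarith

theorem abs_fst_le_of_degLen_le (hk : 0 < k) (hγ : LocallyLipschitz γ) (ha : |(γ a).1| ≤ 2)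
    (hE : degLen (weight k) a b γ ≤ C * k) (ht : t ∈ Icc a b) : |(γ t).1| ≤ 2 + C := by
  refine abs_le'.2 ⟨?_, ?_⟩
  · exact apply_le_add_of_degLen_le (ℓ := .fst ℝ ℝ ℝ) hk
      (fun v => (le_abs_self _).trans (abs_fst_le_enorm2 v))
      (fun p hp => le_weight_of_two_le_abs_fst (hp.trans (le_abs_self _))) hγ
      ((le_abs_self _).trans ha) hE ht
  · exact apply_le_add_of_degLen_le (ℓ := -.fst ℝ ℝ ℝ) hk
      (fun v => (neg_le_abs _).trans (abs_fst_le_enorm2 v))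
      (fun p hp => le_weight_of_two_le_abs_fst (hp.trans (neg_le_abs _))) hγ
      ((neg_le_abs _).trans ha) hE ht

theorem abs_snd_le_of_degLen_le (hk : 0 < k) (hγ : LocallyLipschitz γ) (ha : |(γ a).2| ≤ 1)
    (hE : degLen (weight k) a b γ ≤ C * k) (ht : t ∈ Icc a b) : |(γ t).2| ≤ 1 + C := by
  refine abs_le'.2 ⟨?_, ?_⟩
  · exact apply_le_add_of_degLen_le (ℓ := .snd ℝ ℝ ℝ) hk
      (fun v => (le_abs_self _).trans (abs_snd_le_enorm2 v))
      (fun p hp => le_weight_of_one_le_abs_snd (hp.trans (le_abs_self _))) hγ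
      ((le_abs_self _).trans ha) hE ht
  · exact apply_le_add_of_degLen_le (ℓ := -.snd ℝ ℝ ℝ) hk
      (fun v => (neg_le_abs _).trans (abs_snd_le_enorm2 v))
      (fun p hp => le_weight_of_one_le_abs_snd (hp.trans (neg_le_abs _))) hγ
      ((neg_le_abs _).trans ha) hE ht

end Confinement

section RadialRate

/-- The profile `h` with `q + h² q = g_k(√q)` for `0 ≤ q ≤ k²`: at distance `√q` from a well, a
direction calibrated with multiplier `2` has radial and angular parts in the ratio `h : 1`. -/
def radialRate (k q : ℝ) : ℝ := √(min ((k ^ 2 - 1) * q) (k ^ 2 / max q 1 - 1))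

/-- The primitive of `radialRate k / 2` vanishing at `0`. -/
def radialPotential (k q : ℝ) : ℝ := ∫ s in (0 : ℝ)..q, radialRate k s / 2

variable {k q : ℝ}

theorem continuous_radialRate (k : ℝ) : Continuous (radialRate k) := by
  have hne : ∀ q : ℝ, max q 1 ≠ 0 := fun q => by positivity
  unfold radialRate
  fun_prop (disch := assumption)

theorem radialRate_nonneg (k q : ℝ) : 0 ≤ radialRate k q := Real.sqrt_nonneg _

theorem radialRate_le (k q : ℝ) : radialRate k q ≤ √((k ^ 2 - 1) * q) :=
  Real.sqrt_le_sqrt (min_le_left _ _)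

theorem radialRate_of_le_one (hk : 1 ≤ k) (h₁ : q ≤ 1) :
    radialRate k q = √((k ^ 2 - 1) * q) := by
  have hc : 0 ≤ k ^ 2 - 1 := by nlinarith
  rw [radialRate, max_eq_right h₁, div_one, min_eq_left (mul_le_of_le_one_right hc h₁)]

theorem radialRate_of_one_le (hk : 1 ≤ k) (h₁ : 1 ≤ q) : radialRate k q = √(k ^ 2 / q - 1) := by
  have hc : 0 ≤ k ^ 2 - 1 := by nlinarith
  have hle : k ^ 2 / q - 1 ≤ (k ^ 2 - 1) * q :=
    (sub_le_sub_right (div_le_self (sq_nonneg k) h₁) 1).trans (le_mul_of_one_le_right hc h₁)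
  rw [radialRate, max_eq_left h₁, min_eq_right hle]

theorem add_radialRate_sq_mul (hk : 1 ≤ k) (h₀ : 0 ≤ q) (hq : q ≤ k ^ 2) :
    q + radialRate k q ^ 2 * q = gk k √q := by
  have hc : 0 ≤ k ^ 2 - 1 := by nlinarith
  rcases le_total q 1 with h₁ | h₁
  · rw [radialRate_of_le_one hk h₁, Real.sq_sqrt (by positivity), gk_sqrt_of_le_one h₀ h₁]
    ring
  · have hpos : 0 < q := by linarith
    rw [radialRate_of_one_le hk h₁,
      Real.sq_sqrt (by linarith [(one_le_div hpos).2 hq]), gk_of_one_le (Real.one_le_sqrt.2 h₁)]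
    field_simp
    ring

theorem sqrt_div_four_le_radialRate (hk : 5 ≤ k) (h₁ : 1 ≤ q) (hq : q ≤ 10) :
    √(k ^ 2 - 1) / 4 ≤ radialRate k q := by
  have hk₂ : k ^ 2 / 10 ≤ k ^ 2 / q := by gcongr
  rw [radialRate_of_one_le (by linarith) h₁]
  refine Real.le_sqrt_of_sq_le ?_
  rw [div_pow, Real.sq_sqrt (by nlinarith)]
  nlinarith

theorem hasDerivAt_radialPotential (k q : ℝ) :
    HasDerivAt (radialPotential k) (radialRate k q / 2) q :=
  have hcont := (continuous_radialRate k).div_const 2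
  intervalIntegral.integral_hasDerivAt_right (hcont.intervalIntegrable _ _)
    hcont.aestronglyMeasurable.stronglyMeasurableAtFilter hcont.continuousAt

theorem contDiff_radialPotential (k : ℝ) : ContDiff ℝ 1 (radialPotential k) := by
  have hderiv : deriv (radialPotential k) = fun q => radialRate k q / 2 :=
    funext fun q => (hasDerivAt_radialPotential k q).deriv
  refine contDiff_one_iff_deriv.2
    ⟨fun q => (hasDerivAt_radialPotential k q).differentiableAt, ?_⟩
  rw [hderiv]
  exact (continuous_radialRate k).div_const 2

theorem radialPotential_zero (k : ℝ) : radialPotential k 0 = 0 :=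
  intervalIntegral.integral_same

end RadialRate

section WellCalibration

/-- The potential calibrating the spirals around the well `(-σ, 0)`: `dΦ + 2x dy` is the sum of
the angular form and of `σ` times the differential of the radial potential. -/
def wellPotential (k σ : ℝ) (p : ℝ × ℝ) : ℝ :=
  -(p.1 * p.2) + σ * (p.2 + radialPotential k (wellDistSq σ p))

/-- The part of the half-plane of the well `(-σ, 0)` on which `wellPotential k σ` calibrates. -/
def wellRegion (k σ : ℝ) : Set (ℝ × ℝ) := {p | σ * p.1 ≤ 0 ∧ wellDistSq σ p ≤ k ^ 2}

/-- The vector field dual to the calibrating form `d(wellPotential k σ) + 2x dy`. -/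
def wellField (k σ : ℝ) (p : ℝ × ℝ) : ℝ × ℝ :=
  let h := σ * radialRate k (wellDistSq σ p)
  (h * (p.1 + σ) - p.2, (p.1 + σ) + h * p.2)

variable {k σ : ℝ} {p : ℝ × ℝ} {γ : ℝ → ℝ × ℝ} {a b : ℝ}

theorem hasFDerivAt_wellDistSq (σ : ℝ) (p : ℝ × ℝ) :
    HasFDerivAt (wellDistSq σ) ((2 * (p.1 + σ)) • ContinuousLinearMap.fst ℝ ℝ ℝ +
      (2 * p.2) • ContinuousLinearMap.snd ℝ ℝ ℝ) p := by
  refine (((hasFDerivAt_fst.add_const σ).pow 2).add (hasFDerivAt_snd.pow 2)).congr_fderiv ?_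
  simp [mul_add]

theorem hasFDerivAt_wellPotential (k σ : ℝ) (p : ℝ × ℝ) :
    HasFDerivAt (wellPotential k σ) (-(p.1 • ContinuousLinearMap.snd ℝ ℝ ℝ +
      p.2 • ContinuousLinearMap.fst ℝ ℝ ℝ) + σ • (ContinuousLinearMap.snd ℝ ℝ ℝ +
        (radialRate k (wellDistSq σ p) / 2) • ((2 * (p.1 + σ)) • ContinuousLinearMap.fst ℝ ℝ ℝ +
          (2 * p.2) • ContinuousLinearMap.snd ℝ ℝ ℝ))) p :=
  (hasFDerivAt_fst.mul hasFDerivAt_snd).neg.add ((hasFDerivAt_snd.add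
    ((hasDerivAt_radialPotential k _).comp_hasFDerivAt p (hasFDerivAt_wellDistSq σ p))).const_mul σ)

theorem contDiff_wellPotential (k σ : ℝ) : ContDiff ℝ 1 (wellPotential k σ) := by
  have := contDiff_radialPotential k
  unfold wellPotential wellDistSq
  fun_prop

theorem calForm_wellPotential (k σ : ℝ) (p v : ℝ × ℝ) :
    calForm (wellPotential k σ) 2 p v =
      (wellField k σ p).1 * v.1 + (wellField k σ p).2 * v.2 := by
  rw [calForm, (hasFDerivAt_wellPotential k σ p).fderiv]
  simp only [wellField, add_apply, neg_apply, smul_apply, smul_eq_mul,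
    ContinuousLinearMap.coe_fst', ContinuousLinearMap.coe_snd']
  ring

theorem enorm2_wellField (hk : 1 ≤ k) (hσ : σ = 1 ∨ σ = -1) (hp : p ∈ wellRegion k σ) :
    enorm2 (wellField k σ p) = weight k p := by
  have hσ₂ : σ ^ 2 = 1 := sq_eq_one_iff.2 hσ
  rw [weight, Wk_eq_gk hσ hp.1, ← add_radialRate_sq_mul hk (wellDistSq_nonneg σ p) hp.2, enorm2]
  congr 1
  simp only [wellField]
  rw [wellDistSq]
  linear_combination (radialRate k ((p.1 + σ) ^ 2 + p.2 ^ 2) ^ 2 *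
    ((p.1 + σ) ^ 2 + p.2 ^ 2)) * hσ₂

theorem isCalibration_wellPotential (hk : 1 ≤ k) (hσ : σ = 1 ∨ σ = -1) :
    IsCalibration (weight k) 2 (wellRegion k σ) (wellPotential k σ) :=
  isCalibration_of_calForm_eq_dot (contDiff_wellPotential k σ) (calForm_wellPotential k σ)
    fun _ hp => (enorm2_wellField hk hσ hp).le

theorem dot_le_of_calForm_wellPotential_eq (hk : 1 ≤ k) (hσ : σ = 1 ∨ σ = -1) {v : ℝ × ℝ}
    (hp : p ∈ wellRegion k σ)
    (heq : calForm (wellPotential k σ) 2 p v = weight k p * enorm2 v) :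
    (p.1 + σ) * v.1 + p.2 * v.2 ≤ √(k ^ 2 - 1) * enorm2 v * wellDistSq σ p := by
  set u : ℝ × ℝ := (p.1 + σ, p.2) with hu
  set h := radialRate k (wellDistSq σ p) with hh
  have hdist : enorm2 u = √(wellDistSq σ p) := rfl
  have parallel := cross_eq_zero_of_dot_eq_enorm2_mul_enorm2 (u := wellField k σ p) (v := v)
    (by rw [← calForm_wellPotential, heq, enorm2_wellField hk hσ hp])
  have cross_le : σ * (u.1 * v.2 - u.2 * v.1) ≤ enorm2 u * enorm2 v := by
    rcases hσ with rfl | rfl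
    · simpa using cross_le_enorm2_mul_enorm2 u v
    · simpa [mul_comm] using cross_le_enorm2_mul_enorm2 v u
  have rate_le : h ≤ √(k ^ 2 - 1) * √(wellDistSq σ p) := by
    rw [← Real.sqrt_mul' _ (wellDistSq_nonneg σ p)]
    exact radialRate_le k _
  calc (p.1 + σ) * v.1 + p.2 * v.2 = h * (σ * (u.1 * v.2 - u.2 * v.1)) := by
        simp only [wellField, ← hh, hu] at parallel ⊢
        linear_combination -parallel
    _ ≤ (√(k ^ 2 - 1) * √(wellDistSq σ p)) * (√(wellDistSq σ p) * enorm2 v) := by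
        rw [← hdist] at rate_le ⊢
        exact mul_le_mul_of_nonneg rate_le cross_le (radialRate_nonneg k _)
          (mul_nonneg (enorm2_nonneg u) (enorm2_nonneg v))
    _ = √(k ^ 2 - 1) * enorm2 v * √(wellDistSq σ p) ^ 2 := by ring
    _ = _ := by rw [Real.sq_sqrt (wellDistSq_nonneg σ p)]

theorem exists_ae_deriv_wellDistSq_le_mul (hk : 1 ≤ k) (hσ : σ = 1 ∨ σ = -1)
    (hγ : LocallyLipschitz γ) (hS : ∀ t ∈ Icc a b, γ t ∈ wellRegion k σ)
    (heq : ∀ᵐ t ∂volume.restrict (Ioc a b), calForm (wellPotential k σ) 2 (γ t) (deriv γ t) =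
      weight k (γ t) * enorm2 (deriv γ t)) :
    ∃ M, ∀ᵐ t ∂volume.restrict (Ioc a b),
      deriv (wellDistSq σ ∘ γ) t ≤ M * (wellDistSq σ ∘ γ) t := by
  obtain ⟨M, hM⟩ := exists_norm_deriv_le_of_locallyLipschitz hγ a b
  refine ⟨4 * √(k ^ 2 - 1) * M, ?_⟩
  filter_upwards [heq, ae_restrict_of_ae (ae_differentiableAt_of_locallyLipschitz hγ),
    ae_restrict_mem measurableSet_Ioc] with t heqt hdiff htab
  have ht := Ioc_subset_Icc_self htab
  have hderiv := (hasFDerivAt_wellDistSq σ (γ t)).comp_hasDerivAt t hdiff.hasDerivAt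
  have hspeed : enorm2 (deriv γ t) ≤ 2 * M :=
    (enorm2_le_two_mul_norm _).trans (by gcongr; exact hM t ht)
  calc deriv (wellDistSq σ ∘ γ) t
      = 2 * (((γ t).1 + σ) * (deriv γ t).1 + (γ t).2 * (deriv γ t).2) := by
        rw [hderiv.deriv]
        simp only [add_apply, smul_apply, smul_eq_mul, ContinuousLinearMap.coe_fst',
          ContinuousLinearMap.coe_snd']
        ring
    _ ≤ 2 * (√(k ^ 2 - 1) * enorm2 (deriv γ t) * wellDistSq σ (γ t)) := by
        gcongr
        exact dot_le_of_calForm_wellPotential_eq hk hσ (hS t ht) heqt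
    _ ≤ 2 * (√(k ^ 2 - 1) * (2 * M) * wellDistSq σ (γ t)) := by
        have := wellDistSq_nonneg σ (γ t)
        gcongr
    _ = (4 * √(k ^ 2 - 1) * M) * wellDistSq σ (γ t) := by ring

/- The calibrated curves are spirals winding infinitely often around the well: by Grönwall, a
locally Lipschitz calibrated curve that starts at the well stays there. -/
theorem wellPotential_sub_add_two_mul_sArea_lt_degLen (hk : 1 ≤ k) (hσ : σ = 1 ∨ σ = -1)
    (hγ : LocallyLipschitz γ) (hab : a ≤ b) (hS : ∀ t ∈ Icc a b, γ t ∈ wellRegion k σ)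
    (ha : wellDistSq σ (γ a) = 0) (hb : wellDistSq σ (γ b) ≠ 0) :
    wellPotential k σ (γ b) - wellPotential k σ (γ a) + 2 * sArea a b γ <
      degLen (weight k) a b γ := by
  have hcal := isCalibration_wellPotential hk hσ
  refine (hcal.sub_add_mul_sArea_le_degLen (continuous_weight k) hγ hab hS).lt_of_ne fun heq => ?_
  obtain ⟨M, hM⟩ := exists_ae_deriv_wellDistSq_le_mul hk hσ hγ hS
    (hcal.ae_calForm_eq (continuous_weight k) hγ hab hS heq)
  have dist_smooth : ContDiff ℝ 1 (wellDistSq σ) := by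
    unfold wellDistSq
    fun_prop
  have dist_le := le_mul_exp_of_ae_deriv_le_mul (absolutelyContinuousOnInterval_of_locallyLipschitz
    (dist_smooth.locallyLipschitz.comp hγ) a b) hab hM
  simp only [Function.comp_apply, ha, zero_mul] at dist_le
  exact hb (dist_le.antisymm (wellDistSq_nonneg σ _))

end WellCalibration

section CrossingCalibration

/-- The quintic `η` with `η(±1) = ±1`, `η'(±1) = 1/2`, `η''(±1) = 0`. These conditions make
`|d(-2 y η(x)) + 2x dy|²` agree with the squared distance to a well up to fourth order. -/
def crossingProfile (x : ℝ) : ℝ := 23 / 16 * x - 5 / 8 * x ^ 3 + 3 / 16 * x ^ 5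

/-- A calibrating potential vanishing on the axis `x = 0`, for the excursions of a curve between
two crossings of that axis. -/
def crossingPotential (p : ℝ × ℝ) : ℝ := -(2 * p.2 * crossingProfile p.1)

/-- The vector field dual to the calibrating form `d(crossingPotential) + 2x dy`. -/
def crossingField (p : ℝ × ℝ) : ℝ × ℝ :=
  (-(2 * p.2 * deriv crossingProfile p.1), 2 * (p.1 - crossingProfile p.1))

/-- The box to which a curve of degenerate length at most `2k` between the wells is confined. -/
def confinementBox : Set (ℝ × ℝ) := {p | |p.1| ≤ 4 ∧ |p.2| ≤ 3}

variable {k x y u : ℝ}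

theorem hasDerivAt_crossingProfile (x : ℝ) :
    HasDerivAt crossingProfile (1 / 2 + 15 / 16 * (x ^ 2 - 1) ^ 2) x := by
  refine ((((hasDerivAt_id x).const_mul (23 / 16)).sub
    (((hasDerivAt_id x).pow 3).const_mul (5 / 8))).add
    (((hasDerivAt_id x).pow 5).const_mul (3 / 16))).congr_deriv ?_
  simp only [id, Nat.cast_ofNat, Nat.reduceSub]
  ring

theorem deriv_crossingProfile (x : ℝ) :
    deriv crossingProfile x = 1 / 2 + 15 / 16 * (x ^ 2 - 1) ^ 2 :=
  (hasDerivAt_crossingProfile x).deriv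

theorem contDiff_crossingPotential : ContDiff ℝ 1 crossingPotential := by
  unfold crossingPotential crossingProfile
  fun_prop

theorem calForm_crossingPotential (p v : ℝ × ℝ) :
    calForm crossingPotential 2 p v = (crossingField p).1 * v.1 + (crossingField p).2 * v.2 := by
  have hderiv : HasFDerivAt crossingPotential _ p :=
    ((hasFDerivAt_snd.const_mul 2).mul
      ((hasDerivAt_crossingProfile p.1).comp_hasFDerivAt p (hasFDerivAt_fst (𝕜 := ℝ)))).neg
  rw [calForm, hderiv.fderiv, crossingField, deriv_crossingProfile]
  simp only [Function.comp_apply, add_apply, neg_apply, smul_apply, smul_eq_mul,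
    ContinuousLinearMap.coe_fst', ContinuousLinearMap.coe_snd']
  ring

theorem crossingField_sq_neg_fst (x y : ℝ) :
    (crossingField (-x, y)).1 ^ 2 + (crossingField (-x, y)).2 ^ 2 =
      (crossingField (x, y)).1 ^ 2 + (crossingField (x, y)).2 ^ 2 := by
  simp only [crossingField, deriv_crossingProfile, crossingProfile]
  ring

theorem crossingField_sq_le_near_well (h : u ^ 2 + y ^ 2 ≤ 1) :
    (crossingField (1 + u, y)).1 ^ 2 + (crossingField (1 + u, y)).2 ^ 2 ≤
      u ^ 2 + y ^ 2 + 440 * (u ^ 2 + y ^ 2) ^ 2 := by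
  have hu : u ^ 2 ≤ 1 := by nlinarith [sq_nonneg y]
  have hu₁ : u ≤ 1 := (abs_le.1 ((sq_le_one_iff_abs_le_one u).1 hu)).2
  set P := 5 / 2 + 15 / 8 * u + 3 / 8 * u ^ 2 with hP
  set Q := 15 / 8 * (2 + u) ^ 2 with hQ
  have fst_eq : (crossingField (1 + u, y)).1 = -(y * (1 + u ^ 2 * Q)) := by
    simp only [crossingField, deriv_crossingProfile, hQ]
    ring
  have snd_eq : (crossingField (1 + u, y)).2 = u - u ^ 3 * P := by
    simp only [crossingField, crossingProfile, hP]
    ring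
  have hP₀ : 0 ≤ P := by nlinarith
  have hP₅ : P ≤ 5 := by nlinarith
  have hQ₀ : 0 ≤ Q := by positivity
  have hQ₂₀ : Q ≤ 20 := by nlinarith
  have fst_sq_le : (y * (1 + u ^ 2 * Q)) ^ 2 ≤ y ^ 2 + 440 * (y ^ 2 * u ^ 2) := by
    have : 2 * Q + u ^ 2 * Q ^ 2 ≤ 440 := by
      nlinarith [pow_le_pow_left₀ hQ₀ hQ₂₀ 2, sq_nonneg Q]
    nlinarith [mul_nonneg (sq_nonneg y) (sq_nonneg u)]
  have snd_sq_le : (u - u ^ 3 * P) ^ 2 ≤ u ^ 2 + 25 * u ^ 4 := by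
    have : u ^ 2 * P ^ 2 ≤ 25 := by
      nlinarith [pow_le_pow_left₀ hP₀ hP₅ 2, sq_nonneg P]
    have : u ^ 6 * P ^ 2 ≤ 25 * u ^ 4 := by nlinarith [sq_nonneg (u ^ 2)]
    have : 0 ≤ u ^ 4 * P := by positivity
    nlinarith
  rw [fst_eq, snd_eq, neg_sq]
  nlinarith [sq_nonneg (y ^ 2), sq_nonneg (u ^ 2), sq_nonneg (y * u)]

theorem crossingField_sq_le_of_mem_confinementBox {p : ℝ × ℝ} (hp : p ∈ confinementBox) :
    (crossingField p).1 ^ 2 + (crossingField p).2 ^ 2 ≤ 2000 ^ 2 := by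
  obtain ⟨x, y⟩ := p
  obtain ⟨hx, hy⟩ : |x| ≤ 4 ∧ |y| ≤ 3 := hp
  have hx₂ : x ^ 2 ≤ 16 := by nlinarith [sq_abs x, abs_nonneg x]
  have hη' : |deriv crossingProfile x| ≤ 250 := by
    rw [deriv_crossingProfile, abs_of_nonneg (by positivity)]
    nlinarith [sq_nonneg x]
  have hη : |x - crossingProfile x| ≤ 500 := by
    have factor : x - crossingProfile x = x * (-7 / 16 + 5 / 8 * x ^ 2 - 3 / 16 * (x ^ 2) ^ 2) := by
      unfold crossingProfile
      ring
    rw [factor, abs_mul]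
    have : |-7 / 16 + 5 / 8 * x ^ 2 - 3 / 16 * (x ^ 2) ^ 2| ≤ 125 := by
      rw [abs_le]
      constructor <;> nlinarith [sq_nonneg x]
    nlinarith [abs_nonneg x, abs_nonneg (-7 / 16 + 5 / 8 * x ^ 2 - 3 / 16 * (x ^ 2) ^ 2)]
  have fst_le : |(crossingField (x, y)).1| ≤ 1500 := by
    rw [crossingField, abs_neg, abs_mul, abs_mul, abs_two]
    nlinarith [abs_nonneg y, abs_nonneg (deriv crossingProfile x)]
  have snd_le : |(crossingField (x, y)).2| ≤ 1000 := by
    rw [crossingField, abs_mul, abs_two]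
    linarith
  have := sq_le_sq' (abs_le.1 fst_le).1 (abs_le.1 fst_le).2
  have := sq_le_sq' (abs_le.1 snd_le).1 (abs_le.1 snd_le).2
  linarith

theorem crossingField_sq_le_Wk_of_nonneg (hk : 2000 ≤ k) (hp : (x, y) ∈ confinementBox)
    (hx : 0 ≤ x) : (crossingField (x, y)).1 ^ 2 + (crossingField (x, y)).2 ^ 2 ≤ Wk k (x, y) := by
  have hq : wellDistSq (-1) (x, y) = (x - 1) ^ 2 + y ^ 2 := by simp [wellDistSq, sub_eq_add_neg]
  have hq₀ := wellDistSq_nonneg (-1) (x, y)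
  rw [Wk_eq_gk (σ := -1) (.inr rfl) (by simpa using hx)]
  rcases le_total (wellDistSq (-1) (x, y)) 1 with hle | hge
  · rw [gk_sqrt_of_le_one hq₀ hle, hq]
    rw [hq] at hle
    have near := crossingField_sq_le_near_well hle
    rw [add_sub_cancel] at near
    refine near.trans ?_
    gcongr
    nlinarith
  · rw [gk_of_one_le (Real.one_le_sqrt.2 hge)]
    refine (crossingField_sq_le_of_mem_confinementBox hp).trans ?_
    gcongr

theorem enorm2_crossingField_le_weight (hk : 2000 ≤ k) {p : ℝ × ℝ} (hp : p ∈ confinementBox) :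
    enorm2 (crossingField p) ≤ weight k p := by
  obtain ⟨x, y⟩ := p
  refine Real.sqrt_le_sqrt ?_
  rcases le_total 0 x with hx | hx
  · exact crossingField_sq_le_Wk_of_nonneg hk hp hx
  · rw [← crossingField_sq_neg_fst, ← Wk_neg_fst]
    exact crossingField_sq_le_Wk_of_nonneg hk ⟨(abs_neg x).trans_le hp.1, hp.2⟩ (neg_nonneg.2 hx)

theorem isCalibration_crossingPotential (hk : 2000 ≤ k) :
    IsCalibration (weight k) 2 confinementBox crossingPotential :=
  isCalibration_of_calForm_eq_dot contDiff_crossingPotential calForm_crossingPotential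
    fun _ hp => enorm2_crossingField_le_weight hk hp

end CrossingCalibration

section LowerBound

/-- Half the limiting value of `degLen (weight k) - 2 * sArea` along the symmetric curves crossing
the axis `x = 0` at height `y`. -/
def crossingCost (k y : ℝ) : ℝ := y + radialPotential k (1 + y ^ 2)

variable {k σ : ℝ} {p : ℝ × ℝ} {γ : ℝ → ℝ × ℝ} {a b : ℝ}

theorem wellPotential_of_fst_eq_zero (hσ : σ = 1 ∨ σ = -1) (hp : p.1 = 0) :
    wellPotential k σ p = σ * crossingCost k p.2 := by
  rw [wellPotential, crossingCost, wellDistSq, hp, zero_add, zero_mul, neg_zero, zero_add,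
    sq_eq_one_iff.2 hσ]

theorem wellPotential_well (k σ : ℝ) : wellPotential k σ (-σ, 0) = 0 := by
  simp [wellPotential, wellDistSq, radialPotential_zero]

theorem mem_wellRegion_of_mem_confinementBox (hk : 6 ≤ k) (hσ : σ = 1 ∨ σ = -1)
    (hp : p ∈ confinementBox) (hx : σ * p.1 ≤ 0) : p ∈ wellRegion k σ := by
  obtain ⟨h₁, h₂⟩ := hp
  refine ⟨hx, ?_⟩
  have hσ₂ := sq_eq_one_iff.2 hσ
  unfold wellDistSq
  nlinarith [abs_le.1 h₁, sq_abs p.1, sq_abs p.2, abs_nonneg p.1, abs_nonneg p.2]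

theorem mem_confinementBox_of_degLen_le (hk : 0 < k) (hγ : LocallyLipschitz γ)
    (ha : γ a = (-1, 0)) (hE : degLen (weight k) a b γ ≤ 2 * k) :
    ∀ t ∈ Icc a b, γ t ∈ confinementBox := by
  refine fun t ht => ⟨?_, ?_⟩
  · have := abs_fst_le_of_degLen_le hk hγ (by rw [ha]; norm_num) hE ht
    linarith
  · have := abs_snd_le_of_degLen_le hk hγ (by rw [ha]; norm_num) hE ht
    linarith

theorem crossingCost_add_two_mul_sArea_lt_degLen (hk : 6 ≤ k) (hγ : LocallyLipschitz γ)
    (hab : a ≤ b) (hbox : ∀ t ∈ Icc a b, γ t ∈ confinementBox) (hx : ∀ t ∈ Icc a b, (γ t).1 ≤ 0)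
    (ha : γ a = (-1, 0)) (hb : (γ b).1 = 0) :
    crossingCost k (γ b).2 + 2 * sArea a b γ < degLen (weight k) a b γ := by
  have strict := wellPotential_sub_add_two_mul_sArea_lt_degLen (k := k) (σ := 1) (by linarith)
    (.inl rfl) hγ hab
    (fun t ht => mem_wellRegion_of_mem_confinementBox hk (.inl rfl) (hbox t ht)
      (by simpa using hx t ht)) (by simp [ha, wellDistSq])
    (by simp only [wellDistSq, hb]; positivity)
  rwa [ha, wellPotential_well, wellPotential_of_fst_eq_zero (.inl rfl) hb, one_mul,
    sub_zero] at strict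

theorem crossingCost_add_two_mul_sArea_le_degLen (hk : 6 ≤ k) (hγ : LocallyLipschitz γ)
    (hab : a ≤ b) (hbox : ∀ t ∈ Icc a b, γ t ∈ confinementBox) (hx : ∀ t ∈ Icc a b, 0 ≤ (γ t).1)
    (ha : (γ a).1 = 0) (hb : γ b = (1, 0)) :
    crossingCost k (γ a).2 + 2 * sArea a b γ ≤ degLen (weight k) a b γ := by
  have hcal := isCalibration_wellPotential (k := k) (σ := -1) (by linarith) (.inr rfl)
  have := hcal.sub_add_mul_sArea_le_degLen (continuous_weight k) hγ hab fun t ht =>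
    mem_wellRegion_of_mem_confinementBox hk (.inr rfl) (hbox t ht) (by simpa using hx t ht)
  have hwell : wellPotential k (-1) (γ b) = 0 := by
    simpa [hb] using wellPotential_well k (-1)
  rw [hwell, wellPotential_of_fst_eq_zero (.inr rfl) ha] at this
  linarith

theorem two_mul_sArea_le_degLen_of_fst_eq_zero (hk : 2000 ≤ k) (hγ : LocallyLipschitz γ)
    (hab : a ≤ b) (hbox : ∀ t ∈ Icc a b, γ t ∈ confinementBox) (ha : (γ a).1 = 0)
    (hb : (γ b).1 = 0) : 2 * sArea a b γ ≤ degLen (weight k) a b γ := by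
  have := (isCalibration_crossingPotential hk).sub_add_mul_sArea_le_degLen (continuous_weight k)
    hγ hab hbox
  simpa [crossingPotential, crossingProfile, ha, hb] using this

theorem two_mul_add_two_mul_sArea_lt_degLen (hk : 2000 ≤ k) {m : ℝ}
    (hm : ∀ y ∈ Icc (-3 : ℝ) 3, m ≤ crossingCost k y) (hγ : IsCurve a b γ (-1, 0) (1, 0))
    (hE : degLen (weight k) a b γ ≤ 2 * k) :
    2 * m + 2 * sArea a b γ < degLen (weight k) a b γ := by
  obtain ⟨hab, hlip, ha, hb⟩ := hγ
  have hbox := mem_confinementBox_of_degLen_le (by linarith) hlip ha hE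
  have hcont := (locallyLipschitz_fst_comp hlip).continuous.continuousOn (s := Icc a b)
  obtain ⟨s, hs, hs₀, hfirst⟩ := exists_first_crossing (d := 0) hab hcont (by simp [ha])
    (by simp [hb])
  obtain ⟨r, hr, hr₀, hlast⟩ := exists_last_crossing (d := 0) hs.2
    (hcont.mono (Icc_subset_Icc_left hs.1)) hs₀.le (by simp [hb])
  have left := crossingCost_add_two_mul_sArea_lt_degLen (k := k) (by linarith) hlip hs.1
    (fun t ht => hbox t ⟨ht.1, ht.2.trans hs.2⟩)
    (fun t ht => ht.2.eq_or_lt.elim (fun h => h ▸ hs₀.le) fun h => (hfirst t ⟨ht.1, h⟩).le) ha hs₀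
  have middle := two_mul_sArea_le_degLen_of_fst_eq_zero hk hlip hr.1
    (fun t ht => hbox t ⟨hs.1.trans ht.1, ht.2.trans hr.2⟩) hs₀ hr₀
  have right := crossingCost_add_two_mul_sArea_le_degLen (k := k) (by linarith) hlip hr.2
    (fun t ht => hbox t ⟨(hs.1.trans hr.1).trans ht.1, ht.2⟩)
    (fun t ht => ht.1.eq_or_lt.elim (fun h => h ▸ hr₀.ge) fun h => (hlast t ⟨h, ht.2⟩).le) hr₀ hb
  have hms := hm _ (abs_le.1 (hbox s hs).2)
  have hmr := hm _ (abs_le.1 (hbox r ⟨hs.1.trans hr.1, hr.2⟩).2)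
  rw [← degLen_add_adjacent (continuous_weight k) hlip a s b, ← sArea_add_adjacent hlip a s b,
    ← degLen_add_adjacent (continuous_weight k) hlip s r b, ← sArea_add_adjacent hlip s r b]
  linarith

end LowerBound

section MirrorDouble

variable {F : ℝ × ℝ → ℝ} {c : ℝ → ℝ × ℝ} {r t : ℝ}

/-- The concatenation on `[-r, r]` of an arc `c` on `[0, r]` with its reflection in the vertical
axis run backwards. The formula describes this curve when `c r` lies on the axis. -/
def mirrorDouble (r : ℝ) (c : ℝ → ℝ × ℝ) (t : ℝ) : ℝ × ℝ :=
  ((c (r + min t 0)).1 - (c (r - max t 0)).1, (c (r - |t|)).2)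

theorem mirrorDouble_of_nonpos (hr : (c r).1 = 0) (ht : t ≤ 0) :
    mirrorDouble r c t = c (r + t) := by
  simp [mirrorDouble, ht, abs_of_nonpos ht, hr]

theorem mirrorDouble_of_nonneg (hr : (c r).1 = 0) (ht : 0 ≤ t) :
    mirrorDouble r c t = (-(c (r - t)).1, (c (r - t)).2) := by
  simp [mirrorDouble, ht, abs_of_nonneg ht, hr]

theorem locallyLipschitz_mirrorDouble (r : ℝ) (hc : LocallyLipschitz c) :
    LocallyLipschitz (mirrorDouble r c) := by
  have hadd : LocallyLipschitz fun t : ℝ => r + min t 0 :=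
    (ContDiff.locallyLipschitz (𝕂 := ℝ) (by fun_prop : ContDiff ℝ 1 fun u : ℝ => r + u)).comp
      (LocallyLipschitz.id.min_const 0)
  have hsub : LocallyLipschitz fun u : ℝ => r - u :=
    ContDiff.locallyLipschitz (𝕂 := ℝ) (by fun_prop)
  have habs : LocallyLipschitz fun t : ℝ => |t| := lipschitzWith_one_norm.locallyLipschitz
  have hdiff : LocallyLipschitz fun p : ℝ × ℝ => p.1 - p.2 :=
    ContDiff.locallyLipschitz (𝕂 := ℝ) (by fun_prop)
  have hc₁ := locallyLipschitz_fst_comp hc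
  exact (hdiff.comp ((hc₁.comp hadd).prodMk
    (hc₁.comp (hsub.comp (LocallyLipschitz.id.max_const 0))))).prodMk
    ((locallyLipschitz_snd_comp hc).comp (hsub.comp habs))

theorem isCurve_mirrorDouble {x y : ℝ} (h₀ : 0 ≤ r) (hc : LocallyLipschitz c) (hr : (c r).1 = 0)
    (h : c 0 = (-x, y)) : IsCurve (-r) r (mirrorDouble r c) (-x, y) (x, y) := by
  refine ⟨by linarith, locallyLipschitz_mirrorDouble r hc, ?_, ?_⟩
  · rw [mirrorDouble_of_nonpos hr (by linarith), add_neg_cancel, h]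
  · rw [mirrorDouble_of_nonneg hr h₀, sub_self, h, neg_neg]

theorem hasDerivAt_mirrorDouble_of_neg (hc : Differentiable ℝ c) (hr : (c r).1 = 0) (ht : t < 0) :
    HasDerivAt (mirrorDouble r c) (deriv c (r + t)) t := by
  refine ((hc (r + t)).hasDerivAt.comp_const_add r t).congr_of_eventuallyEq ?_
  filter_upwards [Iio_mem_nhds ht] with s hs using mirrorDouble_of_nonpos hr (le_of_lt hs)

theorem hasDerivAt_mirrorDouble_of_pos (hc : Differentiable ℝ c) (hr : (c r).1 = 0) (ht : 0 < t) :
    HasDerivAt (mirrorDouble r c) ((deriv c (r - t)).1, -(deriv c (r - t)).2) t := by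
  have hd : HasDerivAt (fun s => c (r - s)) (-deriv c (r - t)) t :=
    (hc (r - t)).hasDerivAt.comp_const_sub r t
  have hmirror := (hasDerivAt_fst_comp hd).fun_neg.prodMk (hasDerivAt_snd_comp hd)
  rw [Prod.fst_neg, neg_neg] at hmirror
  refine hmirror.congr_of_eventuallyEq ?_
  filter_upwards [Ioi_mem_nhds ht] with s hs using mirrorDouble_of_nonneg hr (le_of_lt hs)

theorem degLen_mirrorDouble (hF : Continuous F) (hsymm : ∀ x y, F (-x, y) = F (x, y))
    (hc : ContDiff ℝ 1 c) (h₀ : 0 ≤ r) (hr : (c r).1 = 0) :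
    degLen F (-r) r (mirrorDouble r c) = 2 * degLen F 0 r c := by
  have hcd := hc.differentiable one_ne_zero
  have hleft : degLen F (-r) 0 (mirrorDouble r c) = degLen F 0 r c := by
    have hshift := intervalIntegral.integral_comp_add_left (a := -r) (b := 0)
      (fun s => F (c s) * enorm2 (deriv c s)) r
    rw [add_neg_cancel, add_zero] at hshift
    refine Eq.trans (intervalIntegral.integral_congr_Ioo_of_le (by linarith) fun t ht => ?_) hshift
    rw [(hasDerivAt_mirrorDouble_of_neg hcd hr ht.2).deriv, mirrorDouble_of_nonpos hr ht.2.le]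
  have hright : degLen F 0 r (mirrorDouble r c) = degLen F 0 r c := by
    have hshift := intervalIntegral.integral_comp_sub_left (a := 0) (b := r)
      (fun s => F (c s) * enorm2 (deriv c s)) r
    rw [sub_self, sub_zero] at hshift
    refine Eq.trans (intervalIntegral.integral_congr_Ioo_of_le h₀ fun t ht => ?_) hshift
    rw [(hasDerivAt_mirrorDouble_of_pos hcd hr ht.1).deriv, mirrorDouble_of_nonneg hr ht.1.le,
      hsymm]
    simp only [enorm2, neg_sq]
  rw [← degLen_add_adjacent hF (locallyLipschitz_mirrorDouble r hc.locallyLipschitz) (-r) 0 r,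
    hleft, hright, two_mul]

theorem sArea_mirrorDouble (hc : ContDiff ℝ 1 c) (h₀ : 0 ≤ r) (hr : (c r).1 = 0) :
    sArea (-r) r (mirrorDouble r c) = 2 * sArea 0 r c := by
  have hcd := hc.differentiable one_ne_zero
  have hc₂ (s : ℝ) : deriv (fun s => (c s).2) s = (deriv c s).2 :=
    (hasDerivAt_snd_comp (hcd s).hasDerivAt).deriv
  have hleft : sArea (-r) 0 (mirrorDouble r c) = sArea 0 r c := by
    have hshift := intervalIntegral.integral_comp_add_left (a := -r) (b := 0)
      (fun s => (c s).1 * deriv (fun u => (c u).2) s) r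
    rw [add_neg_cancel, add_zero] at hshift
    refine Eq.trans (intervalIntegral.integral_congr_Ioo_of_le (by linarith) fun t ht => ?_) hshift
    simp only [hc₂, (hasDerivAt_snd_comp (hasDerivAt_mirrorDouble_of_neg hcd hr ht.2)).deriv,
      mirrorDouble_of_nonpos hr ht.2.le]
  have hright : sArea 0 r (mirrorDouble r c) = sArea 0 r c := by
    have hshift := intervalIntegral.integral_comp_sub_left (a := 0) (b := r)
      (fun s => (c s).1 * deriv (fun u => (c u).2) s) r
    rw [sub_self, sub_zero] at hshift
    refine Eq.trans (intervalIntegral.integral_congr_Ioo_of_le h₀ fun t ht => ?_) hshift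
    simp only [hc₂, (hasDerivAt_snd_comp (hasDerivAt_mirrorDouble_of_pos hcd hr ht.1)).deriv,
      mirrorDouble_of_nonneg hr ht.1.le, neg_mul_neg]
  rw [← sArea_add_adjacent (locallyLipschitz_mirrorDouble r hc.locallyLipschitz) (-r) 0 r,
    hleft, hright, two_mul]

end MirrorDouble

section PolarArc

variable {θ : ℝ → ℝ} {k r : ℝ}

/-- The arc leaving the left well that is parametrised by the distance `s` to the well and has
polar angle `θ s` there. -/
def polarArc (θ : ℝ → ℝ) (s : ℝ) : ℝ × ℝ := (-1 + s * Real.cos (θ s), s * Real.sin (θ s))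

theorem polarArc_zero (θ : ℝ → ℝ) : polarArc θ 0 = (-1, 0) := by simp [polarArc]

theorem polarArc_sqrt_one_add_sq {y : ℝ} (hθ : θ √(1 + y ^ 2) = Real.arctan y) :
    polarArc θ √(1 + y ^ 2) = (0, y) := by
  have hpos : √(1 + y ^ 2) ≠ 0 := by positivity
  rw [polarArc, hθ, Real.cos_arctan, Real.sin_arctan, mul_one_div_cancel hpos,
    mul_div_cancel₀ y hpos, neg_add_cancel]

theorem contDiff_polarArc (hθ : ContDiff ℝ 1 θ) : ContDiff ℝ 1 (polarArc θ) := by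
  unfold polarArc
  fun_prop

theorem wellDistSq_polarArc (θ : ℝ → ℝ) (s : ℝ) : wellDistSq 1 (polarArc θ s) = s ^ 2 := by
  simp only [wellDistSq, polarArc]
  linear_combination s ^ 2 * Real.sin_sq_add_cos_sq (θ s)

theorem hasDerivAt_polarArc {κ s : ℝ} (hθ : HasDerivAt θ κ s) :
    HasDerivAt (polarArc θ) (Real.cos (θ s) - s * Real.sin (θ s) * κ,
      Real.sin (θ s) + s * Real.cos (θ s) * κ) s := by
  have hfst := ((hasDerivAt_id s).fun_mul hθ.cos).const_add (-1)
  have hsnd := (hasDerivAt_id s).fun_mul hθ.sin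
  exact (hfst.prodMk hsnd).congr_deriv (by ext <;> simp only [id] <;> ring)

theorem enorm2_deriv_polarArc {s : ℝ} (hθ : DifferentiableAt ℝ θ s) :
    enorm2 (deriv (polarArc θ) s) = √(1 + s ^ 2 * deriv θ s ^ 2) := by
  rw [(hasDerivAt_polarArc hθ.hasDerivAt).deriv, enorm2]
  congr 1
  linear_combination (1 + s ^ 2 * deriv θ s ^ 2) * Real.sin_sq_add_cos_sq (θ s)

/- Green's formula: in polar coordinates about the well, `2 x dy = s² dθ + d((x - 1) y)`. -/
theorem two_mul_sArea_polarArc (hθ : ContDiff ℝ 1 θ) (r : ℝ) :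
    2 * sArea 0 r (polarArc θ) =
      (∫ s in (0 : ℝ)..r, s ^ 2 * deriv θ s) + ((polarArc θ r).1 - 1) * (polarArc θ r).2 := by
  have := hθ.continuous_deriv_one
  have hc := contDiff_polarArc hθ
  have := hc.continuous_deriv_one
  have hd (s : ℝ) := (hc.differentiable one_ne_zero s).hasDerivAt
  have hboundary := intervalIntegral.integral_eq_sub_of_hasDerivAt (a := 0) (b := r)
    (fun s _ => ((hasDerivAt_fst_comp (hd s)).sub_const 1).fun_mul (hasDerivAt_snd_comp (hd s)))
    (Continuous.intervalIntegrable (by have := hc.continuous; fun_prop) _ _)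
  have hgreen (s : ℝ) : 2 * ((polarArc θ s).1 * deriv (fun u => (polarArc θ u).2) s) =
      s ^ 2 * deriv θ s + ((deriv (polarArc θ) s).1 * (polarArc θ s).2 +
        ((polarArc θ s).1 - 1) * (deriv (polarArc θ) s).2) := by
    rw [(hasDerivAt_snd_comp (hd s)).deriv,
      (hasDerivAt_polarArc (hθ.differentiable one_ne_zero s).hasDerivAt).deriv]
    simp only [polarArc]
    linear_combination s ^ 2 * deriv θ s * Real.sin_sq_add_cos_sq (θ s)
  rw [sArea, ← intervalIntegral.integral_const_mul]
  simp only [hgreen]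
  rw [intervalIntegral.integral_add (Continuous.intervalIntegrable (by fun_prop) _ _)
    (Continuous.intervalIntegrable (by have := hc.continuous; fun_prop) _ _), hboundary,
    polarArc_zero, mul_zero, sub_zero]

theorem degLen_polarArc_le (hk : 1 ≤ k) (hr : 0 ≤ r) (hθ : ContDiff ℝ 1 θ) :
    degLen (weight k) 0 r (polarArc θ) ≤
      ∫ s in (0 : ℝ)..r, √(gk k s) * √(1 + s ^ 2 * deriv θ s ^ 2) := by
  have := hθ.continuous_deriv_one
  have hgk := continuous_gk k
  refine intervalIntegral.integral_mono_on hr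
    (intervalIntegrable_degLen (continuous_weight k) (contDiff_polarArc hθ).locallyLipschitz 0 r)
    (Continuous.intervalIntegrable (by fun_prop) _ _) fun s hs => ?_
  have hW : Wk k (polarArc θ s) ≤ gk k s := by
    simpa only [wellDistSq_polarArc, Real.sqrt_sq hs.1] using Wk_le_gk hk (polarArc θ s)
  rw [enorm2_deriv_polarArc (hθ.differentiable one_ne_zero s)]
  exact mul_le_mul_of_nonneg_right (Real.sqrt_le_sqrt hW) (Real.sqrt_nonneg _)

end PolarArc

theorem exists_contDiff_one_deriv_eq {κ : ℝ → ℝ} (hκ : Continuous κ) (r θ₀ : ℝ) :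
    ∃ θ : ℝ → ℝ, ContDiff ℝ 1 θ ∧ deriv θ = κ ∧ θ r = θ₀ := by
  have hd (s : ℝ) : HasDerivAt (fun s => θ₀ + ∫ u in r..s, κ u) (κ s) s :=
    (intervalIntegral.integral_hasDerivAt_right (hκ.intervalIntegrable _ _)
      hκ.aestronglyMeasurable.stronglyMeasurableAtFilter hκ.continuousAt).const_add θ₀
  have hderiv : deriv (fun s => θ₀ + ∫ u in r..s, κ u) = κ := funext fun s => (hd s).deriv
  exact ⟨_, contDiff_one_iff_deriv.2 ⟨fun s => (hd s).differentiableAt, by rwa [hderiv]⟩, hderiv,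
    by rw [intervalIntegral.integral_same, add_zero]⟩

theorem exists_isCurve_sArea_eq_degLen_le {k y : ℝ} {κ : ℝ → ℝ} (hk : 1 ≤ k) (hκ : Continuous κ) :
    ∃ r γ, IsCurve (-r) r γ (-1, 0) (1, 0) ∧
      sArea (-r) r γ = (∫ s in (0 : ℝ)..√(1 + y ^ 2), s ^ 2 * κ s) - y ∧
      degLen (weight k) (-r) r γ ≤
        2 * ∫ s in (0 : ℝ)..√(1 + y ^ 2), √(gk k s) * √(1 + s ^ 2 * κ s ^ 2) := by
  obtain ⟨θ, hθ, rfl, hθr⟩ := exists_contDiff_one_deriv_eq hκ √(1 + y ^ 2) (Real.arctan y)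
  have hc := contDiff_polarArc hθ
  have hend := polarArc_sqrt_one_add_sq hθr
  have haxis : (polarArc θ √(1 + y ^ 2)).1 = 0 := by rw [hend]
  have hr : 0 ≤ √(1 + y ^ 2) := Real.sqrt_nonneg _
  refine ⟨√(1 + y ^ 2), mirrorDouble √(1 + y ^ 2) (polarArc θ),
    isCurve_mirrorDouble hr hc.locallyLipschitz haxis (polarArc_zero θ), ?_, ?_⟩
  · rw [sArea_mirrorDouble hc hr haxis, two_mul_sArea_polarArc hθ, hend]
    ring
  · rw [degLen_mirrorDouble (continuous_weight k)
      (fun x y => congrArg Real.sqrt (Wk_neg_fst k x y)) hc hr haxis]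
    exact mul_le_mul_of_nonneg_left (degLen_polarArc_le hk hr hθ) zero_le_two

section AngularSpeed

variable {r ε : ℝ}

theorem exists_continuous_mul_eq_one_integral_sq_mul_le {f : ℝ → ℝ} {m : ℝ} (hf : Continuous f)
    (hm : 0 < m) (hmf : ∀ s ∈ Icc 0 r, m * s ^ 2 ≤ f s) (hε : 0 < ε) (hεr : ε ≤ r) :
    ∃ κ : ℝ → ℝ, Continuous κ ∧ (∀ s, 0 ≤ κ s) ∧ (∀ s ∈ Icc ε r, f s * κ s = 1) ∧
      ∫ s in (0 : ℝ)..r, s ^ 2 * κ s ≤ r / m := by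
  have hclamp (s : ℝ) : max ε (min s r) ∈ Icc ε r :=
    ⟨le_max_left _ _, max_le hεr (min_le_right _ _)⟩
  have hmul (s : ℝ) : m * max ε (min s r) ^ 2 ≤ f (max ε (min s r)) :=
    hmf _ ⟨hε.le.trans (hclamp s).1, (hclamp s).2⟩
  have hpos (s : ℝ) : 0 < f (max ε (min s r)) :=
    (mul_pos hm (pow_pos (hε.trans_le (hclamp s).1) 2)).trans_le (hmul s)
  have hκ : Continuous fun s => (f (max ε (min s r)))⁻¹ :=
    Continuous.inv₀ (by fun_prop) fun s => (hpos s).ne'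
  refine ⟨_, hκ, fun s => inv_nonneg.2 (hpos s).le, fun s hs => ?_, ?_⟩
  · have hfs := (hpos s).ne'
    rw [min_eq_left hs.2, max_eq_right hs.1] at hfs
    simp only [min_eq_left hs.2, max_eq_right hs.1, mul_inv_cancel₀ hfs]
  have hconst : ∫ _ in (0 : ℝ)..r, m⁻¹ = r / m := by
    rw [intervalIntegral.integral_const, sub_zero, smul_eq_mul, div_eq_mul_inv]
  rw [← hconst]
  refine intervalIntegral.integral_mono_on (hε.le.trans hεr)
    (Continuous.intervalIntegrable (by fun_prop) _ _) intervalIntegrable_const fun s hs => ?_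
  have hs_le : s ≤ max ε (min s r) := le_max_of_le_right (le_min le_rfl hs.2)
  have hsq : m * s ^ 2 ≤ f (max ε (min s r)) :=
    (mul_le_mul_of_nonneg_left (pow_le_pow_left₀ hs.1 hs_le 2) hm.le).trans (hmul s)
  rwa [← div_eq_mul_inv, div_le_iff₀ (hpos s), ← div_eq_inv_mul, le_div_iff₀ hm, mul_comm]

theorem exists_continuous_eqOn_integral_sq_mul_eq {κ₀ : ℝ → ℝ} {B : ℝ} (hκ₀c : Continuous κ₀)
    (hκ₀ : ∀ s, 0 ≤ κ₀ s) (hε : 0 < ε) (hεr : ε ≤ r)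
    (hB : ∫ s in (0 : ℝ)..r, s ^ 2 * κ₀ s ≤ B) :
    ∃ κ : ℝ → ℝ, Continuous κ ∧ (∀ s, 0 ≤ κ s) ∧ EqOn κ κ₀ (Ici ε) ∧
      ∫ s in (0 : ℝ)..r, s ^ 2 * κ s = B := by
  have hbump : 0 < ∫ s in (0 : ℝ)..r, s ^ 2 * max 0 (ε - s) := by
    refine intervalIntegral.integral_pos (hε.trans_le hεr) (by fun_prop)
      (fun s _ => by positivity) ⟨ε / 2, ⟨by linarith, by linarith⟩, ?_⟩
    exact mul_pos (by positivity) (lt_max_of_lt_right (by linarith))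
  obtain ⟨K, hK⟩ : ∃ K, K * ∫ s in (0 : ℝ)..r, s ^ 2 * max 0 (ε - s) =
      B - ∫ s in (0 : ℝ)..r, s ^ 2 * κ₀ s := ⟨_, div_mul_cancel₀ _ hbump.ne'⟩
  have hK₀ : 0 ≤ K := nonneg_of_mul_nonneg_left (by linarith) hbump
  refine ⟨fun s => κ₀ s + K * max 0 (ε - s), by fun_prop,
    fun s => add_nonneg (hκ₀ s) (by positivity), fun s hs => ?_, ?_⟩
  · simp only [max_eq_left (sub_nonpos.2 (mem_Ici.1 hs)), mul_zero, add_zero]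
  · simp only [mul_add, mul_left_comm _ K]
    rw [intervalIntegral.integral_add (Continuous.intervalIntegrable (by fun_prop) _ _)
      (Continuous.intervalIntegrable (by fun_prop) _ _), intervalIntegral.integral_const_mul, hK,
      add_sub_cancel]

end AngularSpeed

/- `(s² + f²)(1 + s²κ²) = (f + s²κ)² + (s(1 - fκ))²`. -/
theorem sqrt_mul_sqrt_le_add_mul_abs {s f κ : ℝ} (hs : 0 ≤ s) (hf : 0 ≤ f) (hκ : 0 ≤ κ) :
    √(s ^ 2 + f ^ 2) * √(1 + s ^ 2 * κ ^ 2) ≤ f + s ^ 2 * κ + s * |1 - f * κ| := by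
  rw [← Real.sqrt_mul (by positivity)]
  refine Real.sqrt_le_iff.2 ⟨by positivity, ?_⟩
  have hcross : 0 ≤ (f + s ^ 2 * κ) * (s * |1 - f * κ|) := by positivity
  nlinarith [sq_abs (1 - f * κ)]

section SpiralLength

variable {k r s : ℝ}

theorem gk_eq_sq_add_radialRate_mul_sq (hk : 1 ≤ k) (hs : 0 ≤ s) (hsk : s ≤ k) :
    gk k s = s ^ 2 + (radialRate k (s ^ 2) * s) ^ 2 := by
  have h := add_radialRate_sq_mul hk (sq_nonneg s) (pow_le_pow_left₀ hs hsk 2)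
  rw [Real.sqrt_sq hs] at h
  rw [← h, mul_pow]

theorem radialRate_sq_mul_le (hs : 0 ≤ s) :
    radialRate k (s ^ 2) * s ≤ √(k ^ 2 - 1) * s ^ 2 := by
  have h := radialRate_le k (s ^ 2)
  rw [Real.sqrt_mul' _ (sq_nonneg s), Real.sqrt_sq hs] at h
  exact (mul_le_mul_of_nonneg_right h hs).trans_eq (by ring)

theorem sqrt_div_eight_mul_sq_le_radialRate (hk : 5 ≤ k) (hs : s ∈ Icc 0 2) :
    √(k ^ 2 - 1) / 8 * s ^ 2 ≤ radialRate k (s ^ 2) * s := by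
  have hc : 0 ≤ √(k ^ 2 - 1) * s := mul_nonneg (Real.sqrt_nonneg _) hs.1
  rw [sq s, ← mul_assoc, ← sq]
  refine mul_le_mul_of_nonneg_right ?_ hs.1
  rcases le_total s 1 with h₁ | h₁
  · rw [radialRate_of_le_one (by linarith) (pow_le_one₀ hs.1 h₁), Real.sqrt_mul' _ (sq_nonneg s),
      Real.sqrt_sq hs.1]
    linarith
  · have h := sqrt_div_four_le_radialRate hk (one_le_pow₀ h₁ : 1 ≤ s ^ 2) (by nlinarith [hs.2])
    nlinarith [hs.2, Real.sqrt_nonneg (k ^ 2 - 1)]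

theorem integral_radialRate_sq_mul (k r : ℝ) :
    ∫ s in (0 : ℝ)..r, radialRate k (s ^ 2) * s = radialPotential k (r ^ 2) := by
  have hrate := continuous_radialRate k
  have hd (s : ℝ) :
      HasDerivAt (fun s => radialPotential k (s ^ 2)) (radialRate k (s ^ 2) * s) s := by
    refine ((hasDerivAt_radialPotential k (s ^ 2)).comp s (hasDerivAt_pow 2 s)).congr_deriv ?_
    push_cast
    ring
  rw [intervalIntegral.integral_eq_sub_of_hasDerivAt (fun s _ => hd s)
    (Continuous.intervalIntegrable (by fun_prop) _ _), zero_pow two_ne_zero, radialPotential_zero,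
    sub_zero]

theorem sqrt_gk_mul_sqrt_le {ε κ : ℝ} (hk : 1 ≤ k) (hs : 0 ≤ s) (hsk : s ≤ k) (hε : 0 ≤ ε)
    (hκ : 0 ≤ κ) (hopt : ε ≤ s → radialRate k (s ^ 2) * s * κ = 1) :
    √(gk k s) * √(1 + s ^ 2 * κ ^ 2) ≤
      radialRate k (s ^ 2) * s + (1 + ε * √(k ^ 2 - 1)) * (s ^ 2 * κ) + ε := by
  have hf : 0 ≤ radialRate k (s ^ 2) * s := mul_nonneg (radialRate_nonneg _ _) hs
  have hdefect : s * |1 - radialRate k (s ^ 2) * s * κ| ≤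
      ε * √(k ^ 2 - 1) * (s ^ 2 * κ) + ε := by
    rcases le_total ε s with h | h
    · rw [hopt h, sub_self, abs_zero, mul_zero]
      positivity
    · have hfκ : radialRate k (s ^ 2) * s * κ ≤ √(k ^ 2 - 1) * s ^ 2 * κ :=
        mul_le_mul_of_nonneg_right (radialRate_sq_mul_le hs) hκ
      have habs : |1 - radialRate k (s ^ 2) * s * κ| ≤ 1 + √(k ^ 2 - 1) * s ^ 2 * κ :=
        abs_le.2 ⟨by linarith, by nlinarith [mul_nonneg hf hκ]⟩
      calc s * |1 - radialRate k (s ^ 2) * s * κ|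
          ≤ ε * (1 + √(k ^ 2 - 1) * s ^ 2 * κ) := mul_le_mul h habs (abs_nonneg _) hε
        _ = ε * √(k ^ 2 - 1) * (s ^ 2 * κ) + ε := by ring
  rw [gk_eq_sq_add_radialRate_mul_sq hk hs hsk]
  linarith [sqrt_mul_sqrt_le_add_mul_abs hs hf hκ]

theorem integral_sqrt_gk_mul_sqrt_le {κ : ℝ → ℝ} {ε : ℝ} (hk : 1 ≤ k) (hr : 0 ≤ r) (hrk : r ≤ k)
    (hε : 0 ≤ ε) (hκc : Continuous κ) (hκ : ∀ s, 0 ≤ κ s)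
    (hopt : ∀ s ∈ Icc ε r, radialRate k (s ^ 2) * s * κ s = 1) :
    ∫ s in (0 : ℝ)..r, √(gk k s) * √(1 + s ^ 2 * κ s ^ 2) ≤
      radialPotential k (r ^ 2) +
        (1 + ε * √(k ^ 2 - 1)) * (∫ s in (0 : ℝ)..r, s ^ 2 * κ s) + ε * r := by
  have hgk := continuous_gk k
  have hrate := continuous_radialRate k
  have hradial : IntervalIntegrable (fun s => radialRate k (s ^ 2) * s) volume 0 r :=
    Continuous.intervalIntegrable (by fun_prop) _ _
  have hturn : IntervalIntegrable (fun s => (1 + ε * √(k ^ 2 - 1)) * (s ^ 2 * κ s)) volume 0 r :=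
    Continuous.intervalIntegrable (by fun_prop) _ _
  calc ∫ s in (0 : ℝ)..r, √(gk k s) * √(1 + s ^ 2 * κ s ^ 2)
      ≤ ∫ s in (0 : ℝ)..r, (radialRate k (s ^ 2) * s +
          (1 + ε * √(k ^ 2 - 1)) * (s ^ 2 * κ s) + ε) :=
        intervalIntegral.integral_mono_on hr (Continuous.intervalIntegrable (by fun_prop) _ _)
          ((hradial.add hturn).add intervalIntegrable_const) fun s hs =>
          sqrt_gk_mul_sqrt_le hk hs.1 (hs.2.trans hrk) hε (hκ s) fun h => hopt s ⟨h, hs.2⟩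
    _ = _ := by
        rw [intervalIntegral.integral_add (hradial.add hturn) intervalIntegrable_const,
          intervalIntegral.integral_add hradial hturn, integral_radialRate_sq_mul,
          intervalIntegral.integral_const_mul, intervalIntegral.integral_const, sub_zero,
          smul_eq_mul, mul_comm r]

end SpiralLength

section Competitors

variable {k y A : ℝ}

/- The competitor follows the calibrated spiral down to distance `ε` from the well and spends the
missing area on turns inside that disc, where each unit of area costs only slightly more than
`2` units of length. -/
theorem exists_isCurve_degLen_le_add_mul {ε : ℝ} (hk : 5 ≤ k) (hy : y ∈ Icc (-1) 1)
    (hA : 16 / √(k ^ 2 - 1) ≤ A + y) (hε : 0 < ε) (hε₁ : ε ≤ 1) :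
    ∃ a b γ, IsCurve a b γ (-1, 0) (1, 0) ∧ sArea a b γ = A ∧
      degLen (weight k) a b γ ≤ 2 * A + 2 * crossingCost k y +
        ε * (2 * (√(k ^ 2 - 1) * (A + y) + √(1 + y ^ 2))) := by
  have hc : 0 < √(k ^ 2 - 1) := Real.sqrt_pos.2 (by nlinarith)
  have hr₁ : 1 ≤ √(1 + y ^ 2) := Real.one_le_sqrt.2 (by nlinarith)
  have hr₂ : √(1 + y ^ 2) ≤ 2 := Real.sqrt_le_iff.2 ⟨by norm_num, by nlinarith [hy.1, hy.2]⟩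
  have hrate := continuous_radialRate k
  have hturns : √(1 + y ^ 2) / (√(k ^ 2 - 1) / 8) ≤ A + y := by
    refine le_trans ?_ hA
    rw [div_div_eq_mul_div]
    gcongr
    linarith
  obtain ⟨κ₀, hκ₀c, hκ₀, hopt, hκ₀A⟩ := exists_continuous_mul_eq_one_integral_sq_mul_le
    (by fun_prop : Continuous fun s => radialRate k (s ^ 2) * s) (by positivity)
    (fun s hs => sqrt_div_eight_mul_sq_le_radialRate hk ⟨hs.1, hs.2.trans hr₂⟩) hε (hε₁.trans hr₁)
  obtain ⟨κ, hκc, hκ, hκκ₀, hκA⟩ := exists_continuous_eqOn_integral_sq_mul_eq hκ₀c hκ₀ hε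
    (hε₁.trans hr₁) (hκ₀A.trans hturns)
  obtain ⟨r, γ, hγ, hγA, hγE⟩ := exists_isCurve_sArea_eq_degLen_le (y := y)
    (by linarith : 1 ≤ k) hκc
  have hlen := integral_sqrt_gk_mul_sqrt_le (by linarith) (by linarith) (by linarith) hε.le hκc hκ
    fun s hs => hκκ₀ (mem_Ici.2 hs.1) ▸ hopt s hs
  refine ⟨-r, r, γ, hγ, by rw [hγA, hκA, add_sub_cancel_right], ?_⟩
  rw [hκA, Real.sq_sqrt (by positivity)] at hlen
  rw [crossingCost]
  linarith

theorem le_two_mul_add_two_mul_crossingCost {L : ℝ} (hk : 5 ≤ k) (hy : y ∈ Icc (-1) 1)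
    (hA : 16 / √(k ^ 2 - 1) ≤ A + y)
    (hL : ∀ a b γ, IsCurve a b γ (-1, 0) (1, 0) → sArea a b γ = A → L ≤ degLen (weight k) a b γ) :
    L ≤ 2 * A + 2 * crossingCost k y := by
  have hlim : Tendsto (fun ε => 2 * A + 2 * crossingCost k y +
      ε * (2 * (√(k ^ 2 - 1) * (A + y) + √(1 + y ^ 2)))) (𝓝[>] 0)
      (𝓝 (2 * A + 2 * crossingCost k y)) :=
    tendsto_nhdsWithin_of_tendsto_nhds (Continuous.tendsto' (by fun_prop) _ _ (by simp))
  refine ge_of_tendsto hlim ?_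
  filter_upwards [Ioc_mem_nhdsGT one_pos] with ε hε
  obtain ⟨a, b, γ, hγ, hγA, hγE⟩ := exists_isCurve_degLen_le_add_mul hk hy hA hε.1 hε.2
  exact (hL a b γ hγ hγA).trans hγE

end Competitors

section CrossingCost

variable {k y : ℝ}

theorem continuous_crossingCost (k : ℝ) : Continuous (crossingCost k) := by
  have := (contDiff_radialPotential k).continuous
  unfold crossingCost
  fun_prop

theorem crossingCost_zero_le (hk : 0 ≤ k) : crossingCost k 0 ≤ k / 2 := by
  have hrate := continuous_radialRate k
  calc crossingCost k 0 = ∫ s in (0 : ℝ)..1, radialRate k s / 2 := by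
        simp [crossingCost, radialPotential]
    _ ≤ ∫ _ in (0 : ℝ)..1, k / 2 := by
        refine intervalIntegral.integral_mono_on zero_le_one
          (Continuous.intervalIntegrable (by fun_prop) _ _) intervalIntegrable_const fun s hs => ?_
        have hle : √((k ^ 2 - 1) * s) ≤ k :=
          Real.sqrt_le_iff.2 ⟨hk, by nlinarith [hs.1, hs.2, sq_nonneg k]⟩
        linarith [radialRate_le k s]
    _ = k / 2 := by simp

theorem sub_one_mul_le_radialPotential_sub {q : ℝ} (hk : 5 ≤ k) (h₁ : 1 ≤ q) (hq : q ≤ 10) :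
    (q - 1) * (√(k ^ 2 - 1) / 8) ≤ radialPotential k q - radialPotential k 1 := by
  have hradial (a b : ℝ) : IntervalIntegrable (fun s => radialRate k s / 2) volume a b :=
    ((continuous_radialRate k).div_const 2).intervalIntegrable _ _
  rw [radialPotential, radialPotential,
    intervalIntegral.integral_interval_sub_left (hradial _ _) (hradial _ _), ← smul_eq_mul,
    ← intervalIntegral.integral_const]
  refine intervalIntegral.integral_mono_on h₁ intervalIntegrable_const (hradial _ _) fun s hs => ?_
  linarith [sqrt_div_four_le_radialRate hk hs.1 (hs.2.trans hq)]

theorem mem_Icc_of_crossingCost_le_crossingCost_zero (hk : 5 ≤ k) (hy : y ∈ Icc (-3) 3)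
    (h : crossingCost k y ≤ crossingCost k 0) : y ∈ Icc (-(8 / √(k ^ 2 - 1))) 0 := by
  have hc : 0 < √(k ^ 2 - 1) := Real.sqrt_pos.2 (by nlinarith)
  have hgrowth := sub_one_mul_le_radialPotential_sub (q := 1 + y ^ 2) hk (by nlinarith)
    (by nlinarith [hy.1, hy.2])
  rw [add_sub_cancel_left] at hgrowth
  have hquad : y * (1 + y * (√(k ^ 2 - 1) / 8)) ≤ 0 := by
    simp only [crossingCost, zero_pow two_ne_zero, add_zero, zero_add] at h
    linarith
  have hy₀ : y ≤ 0 := by nlinarith [mul_nonneg (sq_nonneg y) hc.le]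
  refine ⟨?_, hy₀⟩
  rw [neg_le, le_div_iff₀ hc]
  rcases hy₀.eq_or_lt with rfl | hneg
  · norm_num
  · nlinarith

end CrossingCost

/-- for all large `k`, there is an interval `(A₁, A₂)` of area-constraint values,
with `A₁` of order `1/√(k²−1)` and `A₂ → ∞` as `k → ∞`, on which the isoperimetric infimum for
`W_k` between the wells `(±1,0)` is not attained. -/
theorem two_well_nonexistence :
    ∃ C > (0:ℝ), ∃ k0 > (1:ℝ), ∃ A1 A2 : ℝ → ℝ,
      Tendsto A2 atTop atTop ∧
      ∀ k ≥ k0, 0 < A1 k ∧ A1 k < A2 k ∧ A1 k ≤ C / Real.sqrt (k ^ 2 - 1) ∧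
        ∀ A ∈ Set.Ioo (A1 k) (A2 k),
          ¬ ∃ a b γ, IsCurve a b γ (-1, 0) (1, 0) ∧ sArea a b γ = A ∧
            ∀ a' b' γ', IsCurve a' b' γ' (-1, 0) (1, 0) → sArea a' b' γ' = A →
              degLen (fun p => Real.sqrt (Wk k p)) a b γ ≤
                degLen (fun p => Real.sqrt (Wk k p)) a' b' γ' := by
  refine ⟨24, by norm_num, 2000, by norm_num, fun k => 24 / √(k ^ 2 - 1), fun k => k / 2,
    tendsto_id.atTop_div_const two_pos, fun k (hk : 2000 ≤ k) => ?_⟩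
  have hc : 24 ≤ √(k ^ 2 - 1) := Real.le_sqrt_of_sq_le (by nlinarith)
  have hA₁ : 24 / √(k ^ 2 - 1) ≤ 1 := div_le_one_of_le₀ hc (Real.sqrt_nonneg _)
  have h24 : 24 / √(k ^ 2 - 1) = 3 * (8 / √(k ^ 2 - 1)) := by ring
  have h16 : 16 / √(k ^ 2 - 1) = 2 * (8 / √(k ^ 2 - 1)) := by ring
  refine ⟨by positivity, hA₁.trans_lt (by linarith : 1 < k / 2), le_rfl, ?_⟩
  rintro A ⟨hA : 24 / √(k ^ 2 - 1) < A, hAk : A < k / 2⟩ ⟨a, b, γ, hγ, rfl, hmin⟩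
  obtain ⟨y, hy, hymin⟩ := (isCompact_Icc (a := (-3 : ℝ)) (b := 3)).exists_isMinOn
    ⟨0, by norm_num⟩ (continuous_crossingCost k).continuousOn
  have hy0 : crossingCost k y ≤ crossingCost k 0 := hymin (by norm_num)
  obtain ⟨hyl, hyr⟩ := mem_Icc_of_crossingCost_le_crossingCost_zero (by linarith) hy hy0
  have hupper : degLen (weight k) a b γ ≤ 2 * sArea a b γ + 2 * crossingCost k y :=
    le_two_mul_add_two_mul_crossingCost (by linarith) ⟨by linarith, by linarith⟩ (by linarith) hmin
  have hlower := two_mul_add_two_mul_sArea_lt_degLen hk (fun z hz => hymin hz) hγ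
    (by linarith [crossingCost_zero_le (by linarith : 0 ≤ k)])
  linarith
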